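/- arXiv:2410.01963 — 3 statements merged into one kernel-verified Lean document; each statement's English description precedes it below -/
import Mathlib

section
/- Let Λ be a finite-dimensional basic algebra, M := mod Λ, X a τ⁻¹-rigid module, and I an interval contained in [Cogen X, (τ⁻¹X)^⊥] in torf M. Then the following are equivalent: (1) I is a functorially finite maximal join interval in [Cogen X, (τ⁻¹X)^⊥]; (2) [I⁻ ∩ J^d(X), I⁺ ∩ J^d(X)] is a functorially finite maximal join interval in torf J^d(X). -/
/-!
A minimal injective copresentation `0 → X → I₀ → I₁` describes `(τ⁻¹X)^⊥` as the class of those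
`N` for which every map `N → I₁` lifts to `I₀` (`mem_perpTauInv_iff`). It follows that
`C = Cogen X` and `G = (τ⁻¹X)^⊥` are torsion-free classes, and that `P = ⊥X` contains the kernel
of every epimorphism from an object of `P` onto an object of `G` (`perpSetup`). Here
`J = J^d(X) = G ∩ P`.

Then `F ↦ F ∩ J` is an isomorphism of lattices from `[C, G]` to `torf J`: its inverse `psi` sends
`H` to the objects of `G` whose submodules in `P` all lie in `H`, and every object of `F` is an
extension of its `C`-quotient by an object of `F ∩ J`. Covers, `pop`, and hence maximal join
intervals correspond to each other (`PerpSetup.maxJoin_iff`).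

For functorial finiteness, left approximations by torsion-free classes always exist: they are the
torsion-free quotients (`IsTorf.contraFinIn`). Right `F`-approximations of objects of `J` give
right `F ∩ J`-approximations by passing to `P`-torsion submodules (`PerpSetup.covFin_inter`).
Conversely, right approximations by `F` are glued by pullbacks from those by `F ∩ J`, by `C` and
by `G` (`PerpSetup.covFin_of_inter`); the ones by `G` are themselves pullbacks of powers of
`I₀ → I₁` (`covFin_perpTauInv`).
-/

/- Framework: the category `mod Λ` of finitely generated modules over a
finite-dimensional algebra `Λ`, modeled concretely via `ModuleCat Λ` together
with the finiteness predicate `Module.Finite`.  Subcategories are sets of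
(bundled) modules.  `τ⁻¹`-rigidity and `(τ⁻¹X)^⊥` are encoded via the
Auslander–Smalø characterizations
`Hom(τ⁻¹X, M) = 0 ↔ Ext¹(M', X) = 0 for all M' ∈ Cogen M`. -/

open Function

noncomputable section

namespace Paper

variable (Λ : Type) [Ring Λ]

abbrev Mdl := ModuleCat.{0} Λ

/-- The class of all finitely generated `Λ`-modules, i.e. `mod Λ` itself. -/
def modAll : Set (Mdl Λ) := {M | Module.Finite Λ ↥M}

/-- Isomorphism of modules. -/
def IsoM (M N : Mdl Λ) : Prop := Nonempty (↥M ≃ₗ[Λ] ↥N)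

/-- Direct sum of two modules. -/
def dsum (M N : Mdl Λ) : Mdl Λ := ModuleCat.of Λ (↥M × ↥N)

/-- `M` is a direct summand of `N`. -/
def IsSummand (M N : Mdl Λ) : Prop :=
  ∃ (i : ↥M →ₗ[Λ] ↥N) (p : ↥N →ₗ[Λ] ↥M), p.comp i = LinearMap.id

/-- The additive closure `add X`: direct summands of finite direct sums of copies of `X`. -/
def addOf (X : Mdl Λ) : Set (Mdl Λ) :=
  {M | ∃ n : ℕ, IsSummand Λ M (ModuleCat.of Λ (Fin n → ↥X))}

/-- `M` is a zero object. -/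
def IsZeroM (M : Mdl Λ) : Prop := Subsingleton ↥M

/-- `M` is indecomposable (and nonzero). -/
def Indec (M : Mdl Λ) : Prop :=
  ¬ IsZeroM Λ M ∧ ∀ A B : Mdl Λ, IsoM Λ M (dsum Λ A B) → IsZeroM Λ A ∨ IsZeroM Λ B

/-- `X` is basic: no nonzero module `N` with `N ⊕ N` a direct summand of `X`. -/
def IsBasic (X : Mdl Λ) : Prop :=
  ∀ N : Mdl Λ, ¬ IsZeroM Λ N → ¬ IsSummand Λ (dsum Λ N N) X

/-- `W` is (up to isomorphism) the module `Z/D` obtained from `Z` by deleting all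
direct summands lying in `D`. -/
def IsDeleted (Z : Mdl Λ) (D : Set (Mdl Λ)) (W : Mdl Λ) : Prop :=
  ∃ Z' : Mdl Λ, IsoM Λ Z (dsum Λ W Z') ∧
    (∀ V, Indec Λ V → IsSummand Λ V Z' → V ∈ D) ∧
    (∀ V, Indec Λ V → IsSummand Λ V W → V ∉ D)

/-- `Cogen 𝒞` for a class of modules `𝒞`. -/
def CogenS (C : Set (Mdl Λ)) : Set (Mdl Λ) :=
  {M | Module.Finite Λ ↥M ∧ ∃ Y ∈ C, ∃ f : ↥M →ₗ[Λ] ↥Y, Injective f}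

/-- `Cogen X` for a module `X`. -/
def Cogen (X : Mdl Λ) : Set (Mdl Λ) := CogenS Λ (addOf Λ X)

/-- `𝒞^⊥ = {M | Hom(𝒞, M) = 0}`. -/
def perpR (C : Set (Mdl Λ)) : Set (Mdl Λ) :=
  {M | Module.Finite Λ ↥M ∧ ∀ X ∈ C, ∀ f : ↥X →ₗ[Λ] ↥M, f = 0}

/-- `⊥𝒞 = {M | Hom(M, 𝒞) = 0}`. -/
def perpL (C : Set (Mdl Λ)) : Set (Mdl Λ) :=
  {M | Module.Finite Λ ↥M ∧ ∀ X ∈ C, ∀ f : ↥M →ₗ[Λ] ↥X, f = 0}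

/-- `0 → A → E → B → 0` is a short exact sequence. -/
def IsSESeq {A E B : Mdl Λ} (f : ↥A →ₗ[Λ] ↥E) (g : ↥E →ₗ[Λ] ↥B) : Prop :=
  Injective f ∧ Surjective g ∧ LinearMap.range f = LinearMap.ker g

/-- `Ext¹(A, B) = 0`: every short exact sequence `0 → B → E → A → 0` splits. -/
def Ext1Zero (A B : Mdl Λ) : Prop :=
  ∀ (E : Mdl Λ) (f : ↥B →ₗ[Λ] ↥E) (g : ↥E →ₗ[Λ] ↥A),
    IsSESeq Λ f g → ∃ s : ↥A →ₗ[Λ] ↥E, g.comp s = LinearMap.id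

/-- `X` is `τ⁻¹`-rigid, i.e. `Hom(τ⁻¹X, X) = 0`; encoded via the Auslander–Smalø
characterization: `Ext¹(Y, X) = 0` for every `Y ∈ Cogen X`. -/
def TauInvRigid (X : Mdl Λ) : Prop :=
  Module.Finite Λ ↥X ∧ ∀ Y ∈ Cogen Λ X, Ext1Zero Λ Y X

/-- The torsion-free class `(τ⁻¹X)^⊥`; encoded via Auslander–Smalø:
`Hom(τ⁻¹X, M) = 0` iff `Ext¹(N, X) = 0` for all `N ∈ Cogen M`. -/
def perpTauInv (X : Mdl Λ) : Set (Mdl Λ) :=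
  {M | Module.Finite Λ ↥M ∧ ∀ N ∈ Cogen Λ M, Ext1Zero Λ N X}

/-- The zero subcategory `0`. -/
def zeroSubcat : Set (Mdl Λ) := {M | IsZeroM Λ M}

/-- `C` is a torsion-free class of the abelian (wide, extension-closed)
subcategory `W`: contained in `W`, contains `0`, closed under extensions (taken
in `W`) and under submodules lying in `W`. -/
def IsTorfIn (W C : Set (Mdl Λ)) : Prop :=
  C ⊆ W ∧ (∃ Z ∈ C, IsZeroM Λ Z) ∧
  (∀ (A E B : Mdl Λ) (f : ↥A →ₗ[Λ] ↥E) (g : ↥E →ₗ[Λ] ↥B),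
      IsSESeq Λ f g → A ∈ C → B ∈ C → E ∈ W → E ∈ C) ∧
  (∀ M N : Mdl Λ, M ∈ W → N ∈ C → (∃ f : ↥M →ₗ[Λ] ↥N, Injective f) → M ∈ C)

/-- `C` is a torsion-free class of `mod Λ`. -/
def IsTorf (C : Set (Mdl Λ)) : Prop := IsTorfIn Λ (modAll Λ) C

/-- `C` is a torsion class of the abelian (wide) subcategory `W`. -/
def IsTorsIn (W C : Set (Mdl Λ)) : Prop :=
  C ⊆ W ∧ (∃ Z ∈ C, IsZeroM Λ Z) ∧
  (∀ (A E B : Mdl Λ) (f : ↥A →ₗ[Λ] ↥E) (g : ↥E →ₗ[Λ] ↥B),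
      IsSESeq Λ f g → A ∈ C → B ∈ C → E ∈ W → E ∈ C) ∧
  (∀ M N : Mdl Λ, M ∈ C → N ∈ W → (∃ g : ↥M →ₗ[Λ] ↥N, Surjective g) → N ∈ C)

/-- Contravariant finiteness of `C` in `B`: every object of `B` admits a left
`C`-approximation. -/
def ContraFinIn (C B : Set (Mdl Λ)) : Prop :=
  ∀ X ∈ B, ∃ X' ∈ C, ∃ h : ↥X →ₗ[Λ] ↥X',
    ∀ C' ∈ C, ∀ f : ↥X →ₗ[Λ] ↥C', ∃ g : ↥X' →ₗ[Λ] ↥C', g.comp h = f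

/-- Covariant finiteness of `C` in `B`: every object of `B` admits a right
`C`-approximation. -/
def CovFinIn (C B : Set (Mdl Λ)) : Prop :=
  ∀ X ∈ B, ∃ X' ∈ C, ∃ h : ↥X' →ₗ[Λ] ↥X,
    ∀ C' ∈ C, ∀ f : ↥C' →ₗ[Λ] ↥X, ∃ g : ↥C' →ₗ[Λ] ↥X', h.comp g = f

def FunctFinIn (C B : Set (Mdl Λ)) : Prop := ContraFinIn Λ C B ∧ CovFinIn Λ C B

def ContraFin (C : Set (Mdl Λ)) : Prop := ContraFinIn Λ C (modAll Λ)
def CovFin (C : Set (Mdl Λ)) : Prop := CovFinIn Λ C (modAll Λ)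
def FunctFin (C : Set (Mdl Λ)) : Prop := ContraFin Λ C ∧ CovFin Λ C

/-- `F'` covers `F` in the lattice of torsion-free classes of `W`. -/
def CoversIn (W F' F : Set (Mdl Λ)) : Prop :=
  IsTorfIn Λ W F ∧ IsTorfIn Λ W F' ∧ F ⊂ F' ∧
    ∀ G, IsTorfIn Λ W G → F ⊂ G → G ⊆ F' → G = F'

/-- `pop^G(F)` computed in `torf W`: the join of `F` together with all covers of
`F` contained in `G`, realized as the intersection of all torsion-free classes
of `W` containing them. -/
def popIn (W G F : Set (Mdl Λ)) : Set (Mdl Λ) :=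
  ⋂₀ {H | IsTorfIn Λ W H ∧ F ⊆ H ∧ ∀ F', CoversIn Λ W F' F → F' ⊆ G → F' ⊆ H}

/-- `[Jlo, Jhi]` is a maximal join interval in the interval `[Ilo, Ihi]` of the
lattice of torsion-free classes of `W`. -/
def IsMaxJoinIn (W Jlo Jhi Ilo Ihi : Set (Mdl Λ)) : Prop :=
  IsTorfIn Λ W Jlo ∧ IsTorfIn Λ W Jhi ∧ Ilo ⊆ Jlo ∧ Jlo ⊆ Jhi ∧ Jhi ⊆ Ihi ∧
    Jhi = popIn Λ W Ihi Jlo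

/-- The direct sum `⊕_{a ≤ j ≤ b} X j`. -/
def seqSum (X : ℕ → Mdl Λ) (a b : ℕ) : Mdl Λ :=
  ModuleCat.of Λ ((j : Finset.Icc a b) → ↥(X j.1))

/-- `(X 1, …, X m)` is a cogen-preordered (basic) `τ⁻¹`-rigid module of length `m`. -/
def CogenPreordered (m : ℕ) (X : ℕ → Mdl Λ) : Prop :=
  IsBasic Λ (seqSum Λ X 1 m) ∧ TauInvRigid Λ (seqSum Λ X 1 m) ∧
  ∀ k, 1 ≤ k → k ≤ m → ∀ Y, Indec Λ Y → IsSummand Λ Y (X k) →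
    ∀ W, IsDeleted Λ (seqSum Λ X k m) (addOf Λ Y) W → Y ∉ Cogen Λ W

/-- `X` is cogen-minimal. -/
def CogenMinimal (X : Mdl Λ) : Prop :=
  ∀ Y, Indec Λ Y → IsSummand Λ Y X →
    ∀ W, IsDeleted Λ X (addOf Λ Y) W → Y ∉ Cogen Λ W

/-- `X` is a split injective object of `C`. -/
def SplitInjIn (C : Set (Mdl Λ)) (X : Mdl Λ) : Prop :=
  X ∈ C ∧ ∀ Y ∈ C, ∀ f : ↥X →ₗ[Λ] ↥Y, Injective f →
    ∃ r : ↥Y →ₗ[Λ] ↥X, r.comp f = LinearMap.id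

/-- `I` is the basic module `I_s(C)` whose additive closure consists of the
split injective objects of `C`. -/
def IsMinSplitInj (C : Set (Mdl Λ)) (I : Mdl Λ) : Prop :=
  IsBasic Λ I ∧ addOf Λ I = {X | SplitInjIn Λ C X}

/-- `C` is an ICE-closed subcategory of `mod Λ`. -/
def IsICE (C : Set (Mdl Λ)) : Prop :=
  (∀ M ∈ C, Module.Finite Λ ↥M) ∧
  (∀ M N, IsoM Λ M N → M ∈ C → N ∈ C) ∧
  (∃ Z ∈ C, IsZeroM Λ Z) ∧
  (∀ (A E B : Mdl Λ) (f : ↥A →ₗ[Λ] ↥E) (g : ↥E →ₗ[Λ] ↥B),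
      IsSESeq Λ f g → A ∈ C → B ∈ C → Module.Finite Λ ↥E → E ∈ C) ∧
  (∀ M N : Mdl Λ, M ∈ C → N ∈ C → ∀ f : ↥M →ₗ[Λ] ↥N,
      ModuleCat.of Λ ↥(LinearMap.range f) ∈ C ∧
      ModuleCat.of Λ (↥N ⧸ LinearMap.range f) ∈ C)

/-- `W_L(C)`. -/
def WL (C : Set (Mdl Λ)) : Set (Mdl Λ) :=
  {X | X ∈ C ∧ ∀ Y ∈ C, ∀ f : ↥Y →ₗ[Λ] ↥X, ModuleCat.of Λ ↥(LinearMap.ker f) ∈ C}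

/-- An ICE-sequence. -/
def IsICESeq (C : ℤ → Set (Mdl Λ)) : Prop :=
  ∀ k : ℤ, IsICE Λ (C k) ∧ IsTorsIn Λ (WL Λ (C k)) (C (k + 1))

/-- The ICE-sequence `C` has length `m`. -/
def ICESeqLen (C : ℤ → Set (Mdl Λ)) (m : ℕ) : Prop :=
  C 1 = zeroSubcat Λ ∧ C (-(m : ℤ)) = modAll Λ

/-- The heart `G ∩ ⊥F` of an interval `[F, G]` of torsion-free classes. -/
def heart (F G : Set (Mdl Λ)) : Set (Mdl Λ) := G ∩ perpL Λ F

/-- The `τ⁻¹`-perpendicular category `J^d(X) = (τ⁻¹X)^⊥ ∩ ⊥X`. -/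
def Jd (X : Mdl Λ) : Set (Mdl Λ) := perpTauInv Λ X ∩ perpL Λ (addOf Λ X)

/-- `B * C`: objects which are extensions of an object of `C` by an object of `B`. -/
def starProd (B C : Set (Mdl Λ)) : Set (Mdl Λ) :=
  {E | ∃ Mb Mc : Mdl Λ, Mb ∈ B ∧ Mc ∈ C ∧
    ∃ (f : ↥Mb →ₗ[Λ] ↥E) (g : ↥E →ₗ[Λ] ↥Mc), IsSESeq Λ f g}

/-- The torsion submodule `t_X M`: the largest submodule of `M` lying in `⊥X`. -/
def tSub (X M : Mdl Λ) : Submodule Λ ↥M :=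
  sSup {N : Submodule Λ ↥M | ∀ f : ↥N →ₗ[Λ] ↥X, f = 0}

/-- The torsion functor value `t_X M`. -/
def tMod (X M : Mdl Λ) : Mdl Λ := ModuleCat.of Λ ↥(tSub Λ X M)

/-- `X` is a `τ⁻¹`-rigid object of the wide subcategory `W` (with respect to the
inverse AR translate of `W`); encoded via Auslander–Smalø in `W`, using
`Cogen_W X = Cogen X ∩ W` and `Ext¹_W = Ext¹`. -/
def TauInvRigidIn (W : Set (Mdl Λ)) (X : Mdl Λ) : Prop :=
  X ∈ W ∧ ∀ Y ∈ Cogen Λ X ∩ W, Ext1Zero Λ Y X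

/-- `X` is cogen-minimal as an object of the wide subcategory `W`. -/
def CogenMinimalIn (W : Set (Mdl Λ)) (X : Mdl Λ) : Prop :=
  ∀ Y, Indec Λ Y → IsSummand Λ Y X →
    ∀ Wd, IsDeleted Λ X (addOf Λ Y) Wd → Y ∉ Cogen Λ Wd ∩ W

end Paper

namespace Paper

/-! ### Linear algebra over `Λ` -/

section LinAlg

variable {Λ : Type} [Ring Λ]

theorem factor_surj {E B C : Type} [AddCommGroup E] [AddCommGroup B] [AddCommGroup C]
    [Module Λ E] [Module Λ B] [Module Λ C] (g : E →ₗ[Λ] B) (hg : Surjective g)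
    (F : E →ₗ[Λ] C) (h : ∀ x, g x = 0 → F x = 0) :
    ∃ k : B →ₗ[Λ] C, ∀ x, k (g x) = F x := by
  refine ⟨((LinearMap.ker g).liftQ F (fun x hx => h x hx)).comp
    (g.quotKerEquivOfSurjective hg).symm.toLinearMap, fun x => ?_⟩
  have : (g.quotKerEquivOfSurjective hg).symm (g x) = (LinearMap.ker g).mkQ x := by
    rw [LinearEquiv.symm_apply_eq]; rfl
  rw [LinearMap.comp_apply, LinearEquiv.coe_coe, this]
  rfl

theorem factor_inj {E B C : Type} [AddCommGroup E] [AddCommGroup B] [AddCommGroup C]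
    [Module Λ E] [Module Λ B] [Module Λ C] (i : B →ₗ[Λ] C) (hi : Injective i)
    (F : E →ₗ[Λ] C) (h : ∀ x, ∃ y, i y = F x) :
    ∃ k : E →ₗ[Λ] B, ∀ x, i (k x) = F x := by
  refine ⟨(LinearEquiv.ofInjective i hi).symm.toLinearMap.comp
    (F.codRestrict (LinearMap.range i) h), fun x => ?_⟩
  exact congrArg Subtype.val ((LinearEquiv.ofInjective i hi).apply_symm_apply ⟨F x, h x⟩)

/-- Every module embedded in an injective module has an injective hull inside it: the range of an
endomorphism fixing the submodule whose range is as small as possible. -/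
theorem exists_hull {I : Type} [AddCommGroup I] [Module Λ I] [IsNoetherian Λ I]
    [IsArtinian Λ I] (hI : Module.Injective Λ I) (C : Submodule Λ I) :
    ∃ S : Submodule Λ I, C ≤ S ∧ Module.Injective Λ S ∧
      ∀ T : Submodule Λ I, T ≤ S → T ⊓ C = ⊥ → T = ⊥ := by
  obtain ⟨S, ⟨e, heC, heS⟩, hmin⟩ := IsArtinian.set_has_minimal
    {S : Submodule Λ I | ∃ e : I →ₗ[Λ] I, (∀ c ∈ C, e c = c) ∧ LinearMap.range e = S}
    ⟨⊤, LinearMap.id, fun _ _ => rfl, LinearMap.range_id⟩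
  -- Any endomorphism fixing `C` with values in `S` has range `S`, hence is bijective on `S`
  -- as soon as it factors through `e`.
  have key : ∀ u : I →ₗ[Λ] I, (∀ c ∈ C, u c = c) → (∀ x, u x ∈ S) →
      ∃ v : S →ₗ[Λ] S, Bijective v ∧ ∀ x : S, (v x : I) = u x := by
    intro u huC huS
    let v : S →ₗ[Λ] S := (u.comp S.subtype).codRestrict S (fun x => huS x)
    have hv : Surjective v := by
      rintro ⟨y, hy⟩
      have h1 : LinearMap.range (u.comp e) ≤ S := by
        rintro _ ⟨x, rfl⟩; exact huS _
      have h2 : LinearMap.range (u.comp e) = S := by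
        by_contra hne
        exact hmin _ ⟨u.comp e, fun c hc => by simp [heC c hc, huC c hc], rfl⟩
          (lt_of_le_of_ne h1 hne)
      obtain ⟨x, hx⟩ : y ∈ LinearMap.range (u.comp e) := h2 ▸ hy
      exact ⟨⟨e x, heS ▸ ⟨x, rfl⟩⟩, Subtype.ext hx⟩
    exact ⟨v, ⟨IsNoetherian.injective_of_surjective_endomorphism v hv, hv⟩, fun x => rfl⟩
  have heS' : ∀ x, e x ∈ S := fun x => heS ▸ ⟨x, rfl⟩
  refine ⟨S, fun c hc => heC c hc ▸ heS' c, ⟨?_⟩, ?_⟩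
  · intro A B _ _ _ _ i hi f
    obtain ⟨g, hg⟩ := hI.out i hi (S.subtype.comp f)
    obtain ⟨v, hv, hve⟩ := key e heC heS'
    obtain ⟨k, hk⟩ := factor_inj v hv.1 ((e.comp g).codRestrict S (fun x => heS' _))
      (fun x => hv.2 _)
    refine ⟨k, fun x => hv.1 ?_⟩
    rw [hk]
    apply Subtype.ext
    rw [hve]
    simp [hg]
  · intro T hTS hTC
    obtain ⟨φ, hφ⟩ := hI.out (T.mkQ.comp C.subtype) (by
      rw [← LinearMap.ker_eq_bot, LinearMap.ker_eq_bot']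
      rintro ⟨c, hc⟩ h
      have : c ∈ T := by simpa using h
      have : c ∈ T ⊓ C := ⟨this, hc⟩
      rw [hTC] at this
      exact Subtype.ext (by simpa using this)) C.subtype
    obtain ⟨v, hv, hve⟩ := key (e.comp (φ.comp T.mkQ))
      (fun c hc => by
        have := hφ ⟨c, hc⟩
        simp only [LinearMap.comp_apply, Submodule.subtype_apply] at this ⊢
        rw [this, heC c hc]) (fun x => heS' _)
    rw [eq_bot_iff]
    intro t ht
    have h0 : v ⟨t, hTS ht⟩ = 0 := by
      apply Subtype.ext
      rw [hve]
      simp [(Submodule.Quotient.mk_eq_zero T).2 ht]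
    have := hv.1 (h0.trans (map_zero v).symm)
    simpa using congrArg Subtype.val this

end LinAlg

/-! ### Finite-dimensionality: enough injectives and finitely many maps -/

section FinDim

variable (K : Type) {Λ : Type} [Field K] [Ring Λ] [Algebra K Λ]

/-- Multiplication by a scalar of `K` as a `Λ`-linear map. -/
def scal (c : K) (N : Type) [AddCommGroup N] [Module Λ N] : N →ₗ[Λ] N where
  toFun x := algebraMap K Λ c • x
  map_add' := by simp
  map_smul' r x := by
    simp only [smul_smul, RingHom.id_apply, Algebra.commutes]

/-- The coinduced `Λ`-module `Hom_K(Λ, V)`, with action `(r • φ) s = φ (s r)`. -/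
def Coind (Λ : Type) [Ring Λ] [Algebra K Λ] (V : Type) [AddCommGroup V] [Module K V] : Type :=
  Λ →ₗ[K] V

variable (V : Type) [AddCommGroup V] [Module K V]

instance : AddCommGroup (Coind K Λ V) := inferInstanceAs (AddCommGroup (Λ →ₗ[K] V))
instance : Module K (Coind K Λ V) := inferInstanceAs (Module K (Λ →ₗ[K] V))

instance : Module Λ (Coind K Λ V) where
  smul r φ := LinearMap.comp (M₂ := Λ) φ (LinearMap.mulRight K r)
  one_smul φ := LinearMap.ext fun s => congrArg (DFunLike.coe (F := Λ →ₗ[K] V) φ) (mul_one s)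
  mul_smul a b φ := LinearMap.ext fun s =>
    congrArg (DFunLike.coe (F := Λ →ₗ[K] V) φ) (mul_assoc s a b).symm
  smul_zero _ := LinearMap.ext fun _ => rfl
  smul_add _ _ _ := LinearMap.ext fun _ => rfl
  add_smul a b φ := LinearMap.ext fun s =>
    (congrArg (DFunLike.coe (F := Λ →ₗ[K] V) φ) (mul_add s a b)).trans
      (map_add (F := Λ →ₗ[K] V) φ _ _)
  zero_smul φ := LinearMap.ext fun s =>
    (congrArg (DFunLike.coe (F := Λ →ₗ[K] V) φ) (mul_zero s)).trans
      (map_zero (F := Λ →ₗ[K] V) φ)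

theorem exists_inj_embedding [FiniteDimensional K Λ] (M : Type) [AddCommGroup M] [Module Λ M]
    [Module.Finite Λ M] :
    ∃ (I : Mdl Λ) (i : M →ₗ[Λ] I), Module.Finite Λ I ∧ Module.Injective Λ I ∧ Injective i := by
  let : Module K M := Module.compHom M (algebraMap K Λ)
  have : IsScalarTower K Λ M := IsScalarTower.of_algebraMap_smul fun _ _ => rfl
  have : Module.Finite K M := Module.Finite.trans Λ M
  have : IsScalarTower K Λ (Coind K Λ M) := IsScalarTower.of_algebraMap_smul fun c φ => by
    refine LinearMap.ext fun s => ?_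
    change φ.toFun (s * algebraMap K Λ c) = c • φ.toFun s
    rw [← Algebra.commutes, ← Algebra.smul_def]
    exact map_smul (F := Λ →ₗ[K] M) φ c s
  have : Module.Finite K (Coind K Λ M) := inferInstanceAs (Module.Finite K (Λ →ₗ[K] M))
  refine ⟨ModuleCat.of Λ (Coind K Λ M),
    { toFun := fun m => (LinearMap.toSpanSingleton Λ M m).restrictScalars K
      map_add' := fun a b => LinearMap.ext fun s => smul_add s a b
      map_smul' := fun r a => LinearMap.ext fun s => (mul_smul s r a).symm },
    Module.Finite.of_restrictScalars_finite K Λ _, ⟨?_⟩, ?_⟩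
  · intro A B _ _ _ _ i hi f
    let : Module K A := Module.compHom A (algebraMap K Λ)
    let : Module K B := Module.compHom B (algebraMap K Λ)
    have : IsScalarTower K Λ A := IsScalarTower.of_algebraMap_smul fun _ _ => rfl
    have : IsScalarTower K Λ B := IsScalarTower.of_algebraMap_smul fun _ _ => rfl
    let f' : A →ₗ[Λ] Coind K Λ M := f
    -- Evaluation at `1` turns the problem into one over the field `K`.
    let ev : A →ₗ[K] M :=
      { toFun := fun a => (f' a).toFun 1
        map_add' := fun a b => by rw [map_add]; rfl
        map_smul' := fun c a => by
          have : f' (c • a) = c • f' a := map_smul (f'.restrictScalars K) c a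
          rw [this]; rfl }
    obtain ⟨p, hp⟩ := (i.restrictScalars K).exists_leftInverse_of_injective
      (LinearMap.ker_eq_bot.2 hi)
    let h : B →ₗ[Λ] Coind K Λ M :=
      { toFun := fun b => (ev.comp p).comp ((LinearMap.toSpanSingleton Λ B b).restrictScalars K)
        map_add' := fun a b => LinearMap.ext fun s => by
          change ev (p (s • (a + b))) = ev (p (s • a)) + ev (p (s • b))
          simp
        map_smul' := fun r a => LinearMap.ext fun s => by
          change ev (p (s • r • a)) = ev (p ((s * r) • a))
          rw [mul_smul] }
    refine ⟨h, fun x => LinearMap.ext fun s => ?_⟩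
    change ev (p (s • i x)) = (f' x).toFun s
    rw [← map_smul]
    have : p (i (s • x)) = s • x := LinearMap.congr_fun hp (s • x)
    rw [this]
    change (f' (s • x)).toFun 1 = _
    rw [map_smul]
    change (f' x).toFun (1 * s) = _
    rw [one_mul]
  · intro a b hab
    have : (1 : Λ) • a = (1 : Λ) • b := LinearMap.congr_fun hab (1 : Λ)
    simpa using this

/-- `Hom_Λ(M, N)` is spanned over `K` by finitely many maps. -/
theorem exists_spanning_maps [FiniteDimensional K Λ] (M N : Type) [AddCommGroup M] [Module Λ M]
    [AddCommGroup N] [Module Λ N] [Module.Finite Λ M] [Module.Finite Λ N] :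
    ∃ (n : ℕ) (g : Fin n → M →ₗ[Λ] N), ∀ f : M →ₗ[Λ] N, ∃ c : Fin n → K,
      ∀ m, f m = ∑ j, g j (scal K (Λ := Λ) (c j) M m) := by
  let : Module K M := Module.compHom M (algebraMap K Λ)
  have : IsScalarTower K Λ M := IsScalarTower.of_algebraMap_smul fun _ _ => rfl
  have : Module.Finite K M := Module.Finite.trans Λ M
  let : Module K N := Module.compHom N (algebraMap K Λ)
  have : IsScalarTower K Λ N := IsScalarTower.of_algebraMap_smul fun _ _ => rfl
  have : Module.Finite K N := Module.Finite.trans Λ N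
  let S : Submodule K (M →ₗ[K] N) :=
    { carrier := {f | ∃ g : M →ₗ[Λ] N, g.restrictScalars K = f}
      add_mem' := by
        rintro _ _ ⟨a, rfl⟩ ⟨b, rfl⟩; exact ⟨a + b, rfl⟩
      zero_mem' := ⟨0, rfl⟩
      smul_mem' := by
        rintro c _ ⟨a, rfl⟩
        refine ⟨a.comp (scal K c M), LinearMap.ext fun m => ?_⟩
        exact map_smul a (algebraMap K Λ c) m }
  obtain ⟨n, s, hs⟩ := Module.Finite.exists_fin (R := K) (M := S)
  choose g hg using fun j => (s j).2
  refine ⟨n, g, fun f => ?_⟩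
  have hf : (⟨f.restrictScalars K, f, rfl⟩ : S) ∈ Submodule.span K (Set.range s) := by
    rw [hs]; trivial
  obtain ⟨c, hc⟩ := (Submodule.mem_span_range_iff_exists_fun K).1 hf
  refine ⟨c, fun m => ?_⟩
  have h1 := congrArg (fun t : S => (t : M →ₗ[K] N) m) hc
  simp only [Submodule.coe_sum, LinearMap.sum_apply] at h1
  have h2 : f m = ∑ j, ((c j • s j : S) : M →ₗ[K] N) m := h1.symm
  rw [h2]
  refine Finset.sum_congr rfl fun j _ => ?_
  rw [Submodule.coe_smul, ← hg j]
  exact (map_smul (g j) (algebraMap K Λ (c j)) m).symm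

end FinDim

end Paper

namespace Paper

/-! ### Minimal injective copresentations and the class `(τ⁻¹X)^⊥` -/

section Copres

variable {Λ : Type} [Ring Λ]

/-- `0 → X → I₀ → I₁` is a minimal injective copresentation of `X` (minimality only at `I₁`,
which is an essential extension of the image of `I₀`), with `I₀` and `I₁` finitely generated. -/
structure IsCopres {X I₀ I₁ : Mdl Λ} (ι : X →ₗ[Λ] I₀) (π : I₀ →ₗ[Λ] I₁) : Prop where
  fin₀ : Module.Finite Λ I₀
  fin₁ : Module.Finite Λ I₁
  inj₀ : Module.Injective Λ I₀
  inj₁ : Module.Injective Λ I₁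
  mono : Injective ι
  exact : ∀ y, π y = 0 ↔ ∃ x, ι x = y
  ess : ∀ T : Submodule Λ I₁, T ⊓ LinearMap.range π = ⊥ → T = ⊥

theorem exists_copres (K : Type) [Field K] [Algebra K Λ] [FiniteDimensional K Λ] (X : Mdl Λ)
    [Module.Finite Λ X] :
    ∃ (I₀ I₁ : Mdl Λ) (ι : X →ₗ[Λ] I₀) (π : I₀ →ₗ[Λ] I₁), IsCopres ι π := by
  have : IsNoetherianRing Λ := IsNoetherianRing.of_finite K Λ
  have : IsArtinianRing Λ := IsArtinianRing.of_finite K Λ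
  obtain ⟨I₀, ι, hf₀, hi₀, hι⟩ := exists_inj_embedding K (Λ := Λ) X
  obtain ⟨I, j, hf, hi, hj⟩ := exists_inj_embedding K (Λ := Λ) (I₀ ⧸ LinearMap.range ι)
  obtain ⟨S, hCS, hS, hess⟩ := exists_hull hi (LinearMap.range j)
  let π : I₀ →ₗ[Λ] S := (j.comp (LinearMap.range ι).mkQ).codRestrict S
    (fun x => hCS ⟨_, rfl⟩)
  refine ⟨I₀, ModuleCat.of Λ S, ι, π, hf₀, inferInstanceAs (Module.Finite Λ S), hi₀, hS, hι,
    fun y => ?_, fun T hT => ?_⟩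
  · rw [← Subtype.coe_inj]
    change j (Submodule.Quotient.mk y) = 0 ↔ _
    rw [map_eq_zero_iff j hj, Submodule.Quotient.mk_eq_zero, LinearMap.mem_range]
  · have h1 := hess (Submodule.map S.subtype T) (Submodule.map_subtype_le S T) (by
      rw [eq_bot_iff]
      rintro _ ⟨⟨t, ht, rfl⟩, ⟨q, hq⟩⟩
      obtain ⟨y, rfl⟩ := Submodule.mkQ_surjective _ q
      have h2 : t ∈ T ⊓ LinearMap.range π := ⟨ht, y, Subtype.ext hq⟩
      rw [hT] at h2
      have h3 : t = 0 := h2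
      simp [h3])
    exact Submodule.map_injective_of_injective S.subtype_injective
      (h1.trans (Submodule.map_bot _).symm)

/-- Every map `N → I₁` lifts along `π : I₀ → I₁`. For a minimal injective copresentation of `X`
this says `Hom(τ⁻¹X, N) = 0`. -/
def Lifts {I₀ I₁ : Mdl Λ} (π : I₀ →ₗ[Λ] I₁) (N : Type) [AddCommGroup N] [Module Λ N] : Prop :=
  ∀ g : N →ₗ[Λ] I₁, ∃ h : N →ₗ[Λ] I₀, ∀ x, π (h x) = g x

variable {X I₀ I₁ : Mdl Λ} {ι : X →ₗ[Λ] I₀} {π : I₀ →ₗ[Λ] I₁}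
variable {A E B : Type} [AddCommGroup A] [AddCommGroup E] [AddCommGroup B]
  [Module Λ A] [Module Λ E] [Module Λ B]

theorem Lifts.of_injective (hc : IsCopres ι π) (i : A →ₗ[Λ] E) (hi : Injective i)
    (h : Lifts π E) : Lifts π A := by
  intro g
  obtain ⟨g', hg'⟩ := hc.inj₁.out i hi g
  obtain ⟨k, hk⟩ := h g'
  exact ⟨k.comp i, fun x => by simp [hk, hg']⟩

theorem Lifts.extension (hc : IsCopres ι π) (f : A →ₗ[Λ] E) (g : E →ₗ[Λ] B) (hf : Injective f)
    (hg : Surjective g) (hfg : ∀ x, g x = 0 ↔ ∃ a, f a = x) (hA : Lifts π A) (hB : Lifts π B) :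
    Lifts π E := by
  intro φ
  obtain ⟨a, ha⟩ := hA (φ.comp f)
  obtain ⟨a', ha'⟩ := hc.inj₀.out f hf a
  obtain ⟨b, hb⟩ := factor_surj g hg (φ - π.comp a') (by
    intro x hx
    obtain ⟨y, rfl⟩ := (hfg x).1 hx
    simp [ha', ha])
  obtain ⟨b', hb'⟩ := hB b
  exact ⟨a' + b'.comp g, fun x => by simp [hb', hb]⟩

theorem Lifts.pi (h : Lifts π A) (n : ℕ) : Lifts π (Fin n → A) := by
  intro g
  choose k hk using fun j => h (g.comp (LinearMap.single Λ (fun _ : Fin n => A) j))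
  refine ⟨∑ j, (k j).comp (LinearMap.proj j), fun x => ?_⟩
  conv_rhs => rw [← Finset.univ_sum_single x]
  simp [LinearMap.sum_apply, hk]

/-- If `Hom(τ⁻¹X, B) = 0`, then maps to `X` extend along monomorphisms with cokernel `B`. -/
theorem Lifts.extend (hc : IsCopres ι π) (f : A →ₗ[Λ] E) (g : E →ₗ[Λ] B) (hf : Injective f)
    (hg : Surjective g) (hfg : ∀ x, g x = 0 ↔ ∃ a, f a = x) (hB : Lifts π B) (u : A →ₗ[Λ] X) :
    ∃ v : E →ₗ[Λ] X, ∀ a, v (f a) = u a := by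
  obtain ⟨F, hF⟩ := hc.inj₀.out f hf (ι.comp u)
  have hF' : ∀ a, F (f a) = ι (u a) := hF
  obtain ⟨k', hk'⟩ := factor_surj g hg (π.comp F) (by
    intro x hx
    obtain ⟨y, rfl⟩ := (hfg x).1 hx
    simp [hF', (hc.exact _).2 ⟨u y, rfl⟩])
  obtain ⟨k, hk⟩ := hB k'
  obtain ⟨r, hr⟩ := factor_inj ι hc.mono (F - k.comp g) (fun x => (hc.exact _).1 (by
    simp [hk, hk']))
  refine ⟨r, fun a => hc.mono ?_⟩
  simp [hr, hF', (hfg (f a)).2 ⟨a, rfl⟩]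

theorem ses_exact {A E B : Mdl Λ} {f : A →ₗ[Λ] E} {g : E →ₗ[Λ] B} (h : IsSESeq Λ f g) (x : E) :
    g x = 0 ↔ ∃ a, f a = x := by
  rw [← LinearMap.mem_ker, ← h.2.2, LinearMap.mem_range]

theorem ext1Zero_of_lifts (hc : IsCopres ι π) {N : Mdl Λ} (hN : Lifts π N) : Ext1Zero Λ N X := by
  intro E f g hfg
  have hex := ses_exact hfg
  obtain ⟨r, hr⟩ := hN.extend hc f g hfg.1 hfg.2.1 hex LinearMap.id
  obtain ⟨s, hs⟩ := factor_surj g hfg.2.1 (LinearMap.id - f.comp r) (by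
    intro x hx
    obtain ⟨a, rfl⟩ := (hex x).1 hx
    simp [hr])
  refine ⟨s, LinearMap.ext fun n => ?_⟩
  obtain ⟨e, rfl⟩ := hfg.2.1 n
  simp [hs, (hex (f (r e))).2 ⟨_, rfl⟩]

theorem lift_of_ext1Zero (hc : IsCopres ι π) {N : Mdl Λ} (hN : Ext1Zero Λ N X)
    (φ : N →ₗ[Λ] I₁) (hφ : ∀ n, ∃ y, π y = φ n) :
    ∃ h : N →ₗ[Λ] I₀, ∀ n, π (h n) = φ n := by
  -- The pullback of `0 → X → I₀ → im π → 0` along `φ` splits.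
  let P := LinearMap.eqLocus (φ.comp (LinearMap.fst Λ N I₀)) (π.comp (LinearMap.snd Λ N I₀))
  let f : X →ₗ[Λ] P := (LinearMap.prod 0 ι).codRestrict P (fun x => by
    change φ 0 = π (ι x)
    rw [map_zero, (hc.exact _).2 ⟨x, rfl⟩])
  let g : P →ₗ[Λ] N := (LinearMap.fst Λ N I₀).comp P.subtype
  have hses : IsSESeq Λ (A := X) (E := ModuleCat.of Λ P) (B := N) f g := by
    refine ⟨?_, ?_, ?_⟩
    · intro a b hab
      exact hc.mono (congrArg (fun p : P => p.1.2) hab)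
    · intro n
      obtain ⟨y, hy⟩ := hφ n
      exact ⟨⟨(n, y), hy.symm⟩, rfl⟩
    · ext ⟨⟨n, y⟩, hp⟩
      constructor
      · rintro ⟨x, hx⟩
        exact (congrArg (fun p : P => p.1.1) hx).symm
      · intro h
        have hn : n = 0 := h
        have hp' : φ n = π y := hp
        rw [hn, map_zero] at hp'
        obtain ⟨x, rfl⟩ := (hc.exact y).1 hp'.symm
        exact ⟨x, Subtype.ext (Prod.ext hn.symm rfl)⟩
  obtain ⟨s, hs⟩ := hN (ModuleCat.of Λ P) f g hses
  refine ⟨(LinearMap.snd Λ N I₀).comp (P.subtype.comp s), fun n => ?_⟩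
  have h1 : φ (s n).1.1 = π (s n).1.2 := (s n).2
  have h2 : (s n).1.1 = n := LinearMap.congr_fun hs n
  rw [h2] at h1
  exact h1.symm

/-- The encoding of `(τ⁻¹X)^⊥` through `Ext¹` agrees with the one through a minimal injective
copresentation of `X`. -/
theorem mem_perpTauInv_iff [IsNoetherianRing Λ] (hc : IsCopres ι π) {N : Mdl Λ} :
    N ∈ perpTauInv Λ X ↔ Module.Finite Λ N ∧ Lifts π N := by
  refine ⟨fun ⟨hf, h⟩ => ⟨hf, fun g => ?_⟩, fun ⟨hf, h⟩ => ⟨hf, ?_⟩⟩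
  · let N' : Submodule Λ N := (LinearMap.range π).comap g
    have hN' : ModuleCat.of Λ N' ∈ Cogen Λ N := by
      refine ⟨inferInstanceAs (Module.Finite Λ N'), N,
        ⟨1, LinearMap.pi fun _ => LinearMap.id, LinearMap.proj 0, rfl⟩,
        N'.subtype, N'.subtype_injective⟩
    obtain ⟨k, hk⟩ := lift_of_ext1Zero hc (h _ hN') (g.comp N'.subtype) (fun n => n.2)
    obtain ⟨k', hk'⟩ := hc.inj₀.out N'.subtype N'.subtype_injective k
    refine ⟨k', fun x => ?_⟩
    -- `g - π k'` vanishes on `N'`, so its image meets `im π` trivially.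
    have h0 : LinearMap.range (g - π.comp k') = ⊥ := by
      apply hc.ess
      rw [eq_bot_iff]
      rintro _ ⟨⟨x, rfl⟩, ⟨y, hy⟩⟩
      have hx : x ∈ N' := by
        refine ⟨y + k' x, ?_⟩
        simp [hy]
      have h1 : k' x = k ⟨x, hx⟩ := hk' ⟨x, hx⟩
      have h2 : π (k ⟨x, hx⟩) = g x := hk ⟨x, hx⟩
      simp [h1, h2]
    have h1 := LinearMap.congr_fun (LinearMap.range_eq_bot.1 h0) x
    exact (sub_eq_zero.1 h1).symm
  · rintro N' ⟨_, Y, ⟨n, i, p, hip⟩, f, hf⟩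
    apply ext1Zero_of_lifts hc
    refine (h.pi n).of_injective hc (i.comp f) ?_
    have hi : Injective i := (show Function.LeftInverse p i from LinearMap.congr_fun hip).injective
    exact hi.comp hf

end Copres

end Paper

namespace Paper

/-! ### The class `Cogen X` and right approximations -/

section Approx

variable {Λ : Type} [Ring Λ] {X : Mdl Λ}

theorem mem_cogen_iff (K : Type) [Field K] [Algebra K Λ] [FiniteDimensional K Λ]
    [Module.Finite Λ X] {M : Mdl Λ} :
    M ∈ Cogen Λ X ↔ Module.Finite Λ M ∧ ∀ m : M, (∀ f : M →ₗ[Λ] X, f m = 0) → m = 0 := by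
  constructor
  · rintro ⟨hM, Y, ⟨n, i, p, hip⟩, f, hf⟩
    refine ⟨hM, fun m hm => hf ?_⟩
    have hi : Function.LeftInverse p i := LinearMap.congr_fun hip
    have h0 : i (f m) = (0 : Fin n → X) := funext fun j =>
      hm ((LinearMap.proj (φ := fun _ : Fin n => (X : Type)) j).comp (i.comp f))
    rw [map_zero]
    apply hi.injective
    rw [h0, map_zero]
  · rintro ⟨hM, h⟩
    obtain ⟨n, g, hg⟩ := exists_spanning_maps K (Λ := Λ) M X
    refine ⟨hM, ModuleCat.of Λ (Fin n → X), ⟨n, LinearMap.id, LinearMap.id, rfl⟩,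
      LinearMap.pi g, ?_⟩
    refine (injective_iff_map_eq_zero (LinearMap.pi g)).2 fun m hm => h m fun f => ?_
    obtain ⟨c, hc⟩ := hg f
    rw [hc]
    refine Finset.sum_eq_zero fun j _ => ?_
    have h1 : g j m = 0 := congrFun hm j
    change g j (algebraMap K Λ (c j) • m) = 0
    rw [map_smul, h1, smul_zero]

theorem mem_perpL_iff {M : Mdl Λ} :
    M ∈ perpL Λ (addOf Λ X) ↔ Module.Finite Λ M ∧ ∀ f : M →ₗ[Λ] X, f = 0 := by
  constructor
  · rintro ⟨hM, h⟩
    exact ⟨hM, h X ⟨1, LinearMap.pi fun _ => LinearMap.id, LinearMap.proj 0, rfl⟩⟩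
  · rintro ⟨hM, h⟩
    refine ⟨hM, ?_⟩
    rintro Y ⟨n, i, p, hip⟩ f
    ext m
    have hi : Function.LeftInverse p i := LinearMap.congr_fun hip
    have h0 : i (f m) = (0 : Fin n → X) := funext fun j =>
      LinearMap.congr_fun
        (h ((LinearMap.proj (φ := fun _ : Fin n => (X : Type)) j).comp (i.comp f))) m
    apply hi.injective
    rw [h0, LinearMap.zero_apply, map_zero]

/-- `(τ⁻¹X)^⊥` has right approximations: pull back `M → I₁ⁿ`, given by a spanning set of
`Hom(M, I₁)`, along `I₀ⁿ → I₁ⁿ`. -/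
theorem covFin_perpTauInv (K : Type) [Field K] [Algebra K Λ] [FiniteDimensional K Λ]
    {I₀ I₁ : Mdl Λ} {ι : X →ₗ[Λ] I₀} {π : I₀ →ₗ[Λ] I₁}
    (hc : IsCopres ι π) (hX : Lifts π X) : CovFin Λ (perpTauInv Λ X) := by
  have : IsNoetherianRing Λ := IsNoetherianRing.of_finite K Λ
  intro M hM
  have hM' : Module.Finite Λ M := hM
  have := hc.fin₀
  have := hc.fin₁
  obtain ⟨n, g, hg⟩ := exists_spanning_maps K (Λ := Λ) M I₁
  let E : Submodule Λ (M × (Fin n → I₀)) := LinearMap.eqLocus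
    ((LinearMap.pi g).comp (LinearMap.fst Λ M (Fin n → I₀)))
    ((LinearMap.pi fun j => π.comp (LinearMap.proj j)).comp (LinearMap.snd Λ M (Fin n → I₀)))
  have hE : ∀ p : E, ∀ j, g j p.1.1 = π (p.1.2 j) := fun p j => congrFun p.2 j
  let h : E →ₗ[Λ] M := (LinearMap.fst Λ M (Fin n → I₀)).comp E.subtype
  refine ⟨ModuleCat.of Λ E, (mem_perpTauInv_iff hc).2
    ⟨inferInstanceAs (Module.Finite Λ E), fun φ => ?_⟩, h, fun C hC f => ?_⟩
  · let κ : (Fin n → X) →ₗ[Λ] E :=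
      (LinearMap.prod 0 (LinearMap.pi fun j => ι.comp (LinearMap.proj j))).codRestrict E
        (fun x => funext fun j => by
          change g j 0 = π (ι (x j))
          rw [map_zero, (hc.exact _).2 ⟨x j, rfl⟩])
    have hκ : Injective κ := fun a b hab => funext fun j =>
      hc.mono (congrArg (fun p : E => p.1.2 j) hab)
    obtain ⟨a, ha⟩ := hX.pi n (φ.comp κ)
    obtain ⟨a', ha'⟩ := hc.inj₀.out κ hκ a
    -- The corrected map kills `Xⁿ = ker h`, so it comes from a map `M → I₁`.
    let ψ : E →ₗ[Λ] I₁ := φ - π.comp a'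
    obtain ⟨b, hb⟩ := factor_surj h.rangeRestrict h.surjective_rangeRestrict ψ (by
      intro p hp
      have hp0 : p.1.1 = 0 := congrArg Subtype.val hp
      have hx : ∀ j, ∃ x, ι x = p.1.2 j := fun j =>
        (hc.exact _).1 (by rw [← hE p j, hp0, map_zero])
      choose x hx using hx
      have hpx : κ x = p := Subtype.ext (Prod.ext hp0.symm (funext hx))
      have h1 : π (a' (κ x)) = φ (κ x) := by rw [ha', ha]; rfl
      rw [← hpx]
      change φ (κ x) - π (a' (κ x)) = 0
      rw [h1, sub_self])
    obtain ⟨b', hb'⟩ := hc.inj₁.out (LinearMap.range h).subtype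
      (LinearMap.range h).subtype_injective b
    obtain ⟨c, hcc⟩ := hg b'
    refine ⟨a' + ∑ j, (scal K (c j) I₀).comp ((LinearMap.proj j).comp
      ((LinearMap.snd Λ M (Fin n → I₀)).comp E.subtype)), fun p => ?_⟩
    have h1 : b' p.1.1 = φ p - π (a' p) := (hb' (h.rangeRestrict p)).trans (hb p)
    have h2 : π (∑ j, algebraMap K Λ (c j) • p.1.2 j) = b' p.1.1 := by
      rw [hcc, map_sum]
      refine Finset.sum_congr rfl fun j _ => ?_
      rw [map_smul, ← hE p j]
      exact (map_smul (g j) _ _).symm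
    rw [LinearMap.add_apply, map_add, LinearMap.sum_apply]
    change π (a' p) + π (∑ j, algebraMap K Λ (c j) • p.1.2 j) = φ p
    rw [h2, h1, add_sub_cancel]
  · have hC' := ((mem_perpTauInv_iff hc).1 hC).2
    choose l hl using fun j => hC' ((g j).comp f)
    exact ⟨(f.prod (LinearMap.pi l)).codRestrict E (fun x => funext fun j => (hl j x).symm), rfl⟩

/-- `Cogen X` has right approximations: embed `Q` into an injective `I` and pull back a right
`add X`-approximation of `I` along `Q → I`. -/
theorem covFin_cogen (K : Type) [Field K] [Algebra K Λ] [FiniteDimensional K Λ]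
    [Module.Finite Λ X] : CovFin Λ (Cogen Λ X) := by
  have : IsNoetherianRing Λ := IsNoetherianRing.of_finite K Λ
  intro Q hQ
  have hQ' : Module.Finite Λ Q := hQ
  obtain ⟨I, j, hI, hinj, hj⟩ := exists_inj_embedding K (Λ := Λ) Q
  obtain ⟨n, g, hg⟩ := exists_spanning_maps K (Λ := Λ) X I
  let P : Submodule Λ (Q × (Fin n → X)) := LinearMap.eqLocus
    (j.comp (LinearMap.fst Λ Q (Fin n → X)))
    ((∑ k, (g k).comp (LinearMap.proj k)).comp (LinearMap.snd Λ Q (Fin n → X)))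
  have hP : ∀ p : P, j p.1.1 = ∑ k, g k (p.1.2 k) := fun p => by
    have h1 : j p.1.1 = (∑ k, (g k).comp (LinearMap.proj k)) p.1.2 := p.2
    rw [h1, LinearMap.sum_apply]; rfl
  refine ⟨ModuleCat.of Λ P, (mem_cogen_iff K).2 ⟨inferInstanceAs (Module.Finite Λ P), ?_⟩,
    (LinearMap.fst Λ Q (Fin n → X)).comp P.subtype, ?_⟩
  · intro p hp
    have h2 : ∀ k, p.1.2 k = 0 := fun k =>
      hp ((LinearMap.proj k).comp ((LinearMap.snd Λ Q (Fin n → X)).comp P.subtype))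
    have h1 : p.1.1 = 0 := hj (by rw [hP p, map_zero]; simp [h2])
    exact Subtype.ext (Prod.ext h1 (funext h2))
  · rintro C ⟨hC, Y, ⟨m, i, r, hir⟩, u, hu⟩ f
    have hi : Injective i := (show Function.LeftInverse r i from LinearMap.congr_fun hir).injective
    let w : C →ₗ[Λ] (Fin m → X) := i.comp u
    obtain ⟨φ, hφ⟩ := hinj.out w (hi.comp hu) (j.comp f)
    choose c hc using fun l => hg (φ.comp (LinearMap.single Λ (fun _ : Fin m => (X : Type)) l))
    let q : C →ₗ[Λ] (Fin n → X) := LinearMap.pi fun k =>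
      ∑ l, (scal K (c l k) X).comp ((LinearMap.proj l).comp w)
    refine ⟨(f.prod q).codRestrict P (fun x => ?_), rfl⟩
    change j (f x) = (∑ k, (g k).comp (LinearMap.proj k)) (q x)
    have h1 : φ (w x) = j (f x) := hφ x
    rw [← h1, ← Finset.univ_sum_single (w x), map_sum, LinearMap.sum_apply]
    have h2 : ∀ l, φ (Pi.single l (w x l)) = ∑ k, g k (scal K (c l k) X (w x l)) :=
      fun l => hc l (w x l)
    simp only [h2]
    rw [Finset.sum_comm]
    refine Finset.sum_congr rfl fun k _ => ?_
    change _ = g k ((∑ l, (scal K (c l k) X).comp ((LinearMap.proj l).comp w)) x)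
    rw [LinearMap.sum_apply, map_sum]
    rfl

end Approx

end Paper

namespace Paper

/-! ### Torsion pairs -/

section Torf

variable {Λ : Type} [Ring Λ]

theorem IsTorf.of_injective {F : Set (Mdl Λ)} (hF : IsTorf Λ F) {M N : Mdl Λ} (hN : N ∈ F)
    (hM : Module.Finite Λ M) (f : M →ₗ[Λ] N) (hf : Injective f) : M ∈ F :=
  hF.2.2.2 M N hM hN ⟨f, hf⟩

theorem IsTorf.of_subsingleton {F : Set (Mdl Λ)} (hF : IsTorf Λ F) (M : Mdl Λ)
    (hM : Subsingleton M) : M ∈ F := by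
  obtain ⟨Z, hZ, _⟩ := hF.2.1
  exact hF.of_injective hZ (Module.Finite.of_finite) 0 (injective_of_subsingleton _)

/-- The canonical sequence of a torsion-free class `F`: the smallest submodule `N` of `M` with
`M ⧸ N ∈ F` is torsion. -/
theorem IsTorf.exists_torsion [IsArtinianRing Λ] {F : Set (Mdl Λ)} (hF : IsTorf Λ F)
    (M : Mdl Λ) (hM : Module.Finite Λ M) :
    ∃ N : Submodule Λ M, ModuleCat.of Λ (M ⧸ N) ∈ F ∧
      ∀ C ∈ F, ∀ f : N →ₗ[Λ] (C : Mdl Λ), f = 0 := by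
  obtain ⟨N, hN, hmin⟩ := IsArtinian.set_has_minimal
    {N : Submodule Λ M | ModuleCat.of Λ (M ⧸ N) ∈ F}
    ⟨⊤, hF.of_subsingleton _ (Submodule.Quotient.subsingleton_iff.2 rfl)⟩
  refine ⟨N, hN, fun C hC f => ?_⟩
  let N' : Submodule Λ M := (LinearMap.ker f).map N.subtype
  have hle : N' ≤ N := Submodule.map_subtype_le N _
  have hN'mem : ∀ x : N, (x : M) ∈ N' ↔ f x = 0 := fun x =>
    ⟨fun ⟨y, hy, hyx⟩ => by
      have : y = x := Subtype.ext hyx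
      exact this ▸ hy, fun hx => ⟨x, hx, rfl⟩⟩
  have hfin : Module.Finite Λ (LinearMap.range f) := Module.Finite.range f
  have hR : ModuleCat.of Λ (LinearMap.range f) ∈ F :=
    hF.of_injective hC hfin (LinearMap.range f).subtype (LinearMap.range f).subtype_injective
  obtain ⟨a, ha⟩ := factor_surj f.rangeRestrict f.surjective_rangeRestrict
    (N'.mkQ.comp N.subtype) (fun x hx => (Submodule.Quotient.mk_eq_zero N').2
      ((hN'mem x).2 (congrArg Subtype.val hx)))
  have hN' : ModuleCat.of Λ (M ⧸ N') ∈ F := by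
    refine hF.2.2.1 (ModuleCat.of Λ (LinearMap.range f)) (ModuleCat.of Λ (M ⧸ N'))
      (ModuleCat.of Λ (M ⧸ N)) a (Submodule.factor hle) ⟨?_, ?_, ?_⟩ hR hN
      (inferInstanceAs (Module.Finite Λ (M ⧸ N')))
    · refine (injective_iff_map_eq_zero a).2 fun r hr => ?_
      obtain ⟨x, rfl⟩ := f.surjective_rangeRestrict r
      rw [ha] at hr
      exact Subtype.ext ((hN'mem x).1 ((Submodule.Quotient.mk_eq_zero N').1 hr))
    · exact Submodule.factor_surjective hle
    · ext q
      obtain ⟨x, rfl⟩ := Submodule.mkQ_surjective _ q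
      constructor
      · rintro ⟨r, hr⟩
        obtain ⟨y, rfl⟩ := f.surjective_rangeRestrict r
        rw [ha] at hr
        rw [← hr]
        exact (Submodule.Quotient.mk_eq_zero N).2 y.2
      · intro hx
        have hx' : x ∈ N := (Submodule.Quotient.mk_eq_zero N).1 hx
        exact ⟨f.rangeRestrict ⟨x, hx'⟩, ha _⟩
  have hEq : N' = N := by
    by_contra hne
    exact hmin N' hN' (lt_of_le_of_ne hle hne)
  ext x
  exact (hN'mem x).1 (hEq.symm ▸ x.2)

/-- Torsion-free classes of `mod Λ` have left approximations, and these restrict to the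
intersection with any class closed under quotients. -/
theorem IsTorf.contraFinIn [IsArtinianRing Λ] {F : Set (Mdl Λ)} (hF : IsTorf Λ F)
    (P B : Set (Mdl Λ)) (hB : B ⊆ modAll Λ)
    (hP : ∀ M ∈ B, ∀ N : Submodule Λ M, ModuleCat.of Λ (M ⧸ N) ∈ F →
      ModuleCat.of Λ (M ⧸ N) ∈ P) : ContraFinIn Λ (F ∩ P) B := by
  intro M hM
  obtain ⟨N, hN, hN0⟩ := hF.exists_torsion M (hB hM)
  refine ⟨ModuleCat.of Λ (M ⧸ N), ⟨hN, hP M hM N hN⟩, N.mkQ, fun C hC f => ?_⟩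
  refine ⟨N.liftQ f fun x hx => ?_, LinearMap.ext fun x => rfl⟩
  exact LinearMap.congr_fun (hN0 C hC.1 (f.comp N.subtype)) ⟨x, hx⟩

/-- What is used about `C = Cogen X`, `G = (τ⁻¹X)^⊥` and `P = ⊥X`, so that `J^d(X) = G ∩ P`. -/
structure PerpSetup (C G P : Set (Mdl Λ)) : Prop where
  torfC : IsTorf Λ C
  torfG : IsTorf Λ G
  le : C ⊆ G
  quot : ∀ {M N : Mdl Λ}, M ∈ P → ∀ f : M →ₗ[Λ] N, Surjective f → N ∈ P
  fin : P ⊆ modAll Λ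
  hom : ∀ {M N : Mdl Λ}, M ∈ P → N ∈ C → ∀ f : M →ₗ[Λ] N, f = 0
  ker : ∀ {A E B : Mdl Λ} (f : A →ₗ[Λ] E) (g : E →ₗ[Λ] B), IsSESeq Λ f g →
    E ∈ P → B ∈ G → Module.Finite Λ A → A ∈ P
  dec : ∀ M : Mdl Λ, Module.Finite Λ M → ∃ N : Submodule Λ M,
    ModuleCat.of Λ N ∈ P ∧ ModuleCat.of Λ (M ⧸ N) ∈ C

theorem isSESeq_mkQ {M : Mdl Λ} (N : Submodule Λ M) :
    IsSESeq Λ (A := ModuleCat.of Λ N) (B := ModuleCat.of Λ (M ⧸ N)) N.subtype N.mkQ :=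
  ⟨N.subtype_injective, N.mkQ_surjective, by
    change LinearMap.range N.subtype = LinearMap.ker N.mkQ
    rw [Submodule.range_subtype, Submodule.ker_mkQ]⟩

/-! ### The isomorphism between `[Cogen X, (τ⁻¹X)^⊥]` and `torf J^d(X)` -/

/-- The inverse of `F ↦ F ∩ J`, for `J = G ∩ P`: the objects of `G` all of whose submodules
in `P` belong to `H`. -/
def psi (G P H : Set (Mdl Λ)) : Set (Mdl Λ) :=
  {M | M ∈ G ∧ ∀ S ∈ P, ∀ i : S →ₗ[Λ] M, Injective i → S ∈ H}

theorem psi_mono {G P H H' : Set (Mdl Λ)} (h : H ⊆ H') : psi G P H ⊆ psi G P H' :=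
  fun _ hM => ⟨hM.1, fun S hS i hi => h (hM.2 S hS i hi)⟩

theorem psi_le {G P H : Set (Mdl Λ)} : psi G P H ⊆ G := fun _ hM => hM.1

namespace PerpSetup

variable {C G P : Set (Mdl Λ)}

theorem inter_torf (s : PerpSetup C G P) {F : Set (Mdl Λ)}
    (hF : IsTorf Λ F) : IsTorfIn Λ (G ∩ P) (F ∩ (G ∩ P)) := by
  refine ⟨Set.inter_subset_right, ?_, ?_, ?_⟩
  · obtain ⟨Z, hZ, _⟩ := hF.2.1
    have hZ0 : Subsingleton (ModuleCat.of Λ PUnit.{1}) := inferInstanceAs (Subsingleton PUnit)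
    obtain ⟨N, hN, _⟩ := s.dec Z (hF.1 hZ)
    exact ⟨_, ⟨hF.of_subsingleton _ hZ0, s.torfG.of_subsingleton _ hZ0,
      s.quot hN (N := ModuleCat.of Λ PUnit.{1}) 0 (surjective_to_subsingleton _)⟩, hZ0⟩
  · intro A E B f g hfg hA hB hE
    exact ⟨hF.2.2.1 A E B f g hfg hA.1 hB.1 (s.torfG.1 hE.1), hE⟩
  · rintro M N hM hN ⟨f, hf⟩
    exact ⟨hF.of_injective hN.1 (s.torfG.1 hM.1) f hf, hM⟩

variable {H : Set (Mdl Λ)}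

theorem le_psi (s : PerpSetup C G P) (hH : IsTorfIn Λ (G ∩ P) H) : C ⊆ psi G P H := by
  intro M hM
  refine ⟨s.le hM, fun S hS i hi => ?_⟩
  have h0 : i = 0 := s.hom hS hM i
  have hS0 : Subsingleton S := ⟨fun a b => hi (by simp [h0])⟩
  obtain ⟨Z, hZ, _⟩ := hH.2.1
  exact hH.2.2.2 S Z ⟨s.torfG.of_subsingleton S hS0, hS⟩ hZ ⟨0, injective_of_subsingleton _⟩

theorem psi_torf (s : PerpSetup C G P) [IsNoetherianRing Λ]
    (hH : IsTorfIn Λ (G ∩ P) H) : IsTorf Λ (psi G P H) := by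
  refine ⟨fun M hM => s.torfG.1 hM.1, ?_, ?_, ?_⟩
  · obtain ⟨Z, hZ, hZ0⟩ := s.torfC.2.1
    exact ⟨Z, s.le_psi hH hZ, hZ0⟩
  · intro A E B f g hfg hA hB hE
    have hEG := s.torfG.2.2.1 A E B f g hfg hA.1 hB.1 hE
    refine ⟨hEG, fun S hS i hi => ?_⟩
    -- `0 → K → S → R → 0`, with `K` a submodule of `A` and `R` a submodule of `B`.
    have : Module.Finite Λ S := s.fin hS
    let u : S →ₗ[Λ] B := g.comp i
    let R : Mdl Λ := ModuleCat.of Λ (LinearMap.range u)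
    let Kr : Mdl Λ := ModuleCat.of Λ (LinearMap.ker u)
    have hses : IsSESeq Λ (A := Kr) (E := S) (B := R) (LinearMap.ker u).subtype u.rangeRestrict :=
      ⟨(LinearMap.ker u).subtype_injective, u.surjective_rangeRestrict, by
        change LinearMap.range (LinearMap.ker u).subtype = LinearMap.ker u.rangeRestrict
        rw [Submodule.range_subtype, LinearMap.ker_rangeRestrict]⟩
    have hRP : R ∈ P := s.quot hS u.rangeRestrict u.surjective_rangeRestrict
    have hKf : Module.Finite Λ Kr := inferInstanceAs (Module.Finite Λ (LinearMap.ker u))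
    have hRi : Injective (LinearMap.range u).subtype := (LinearMap.range u).subtype_injective
    have hRG : R ∈ G := s.torfG.of_injective hB.1 (s.fin hRP) (LinearMap.range u).subtype hRi
    have hKP : Kr ∈ P := s.ker _ _ hses hS hRG hKf
    obtain ⟨k, hk⟩ := factor_inj f hfg.1 (i.comp (LinearMap.ker u).subtype)
      (fun x => (ses_exact hfg _).1 x.2)
    have hki : Injective k := fun a b hab => by
      have h1 := congrArg f hab
      rw [hk, hk] at h1
      exact (LinearMap.ker u).subtype_injective (hi h1)
    exact hH.2.2.1 Kr S R _ _ hses (hA.2 Kr hKP k hki)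
      (hB.2 R hRP (LinearMap.range u).subtype hRi)
      ⟨s.torfG.of_injective hEG (s.fin hS) i hi, hS⟩
  · rintro M N hM hN ⟨f, hf⟩
    exact ⟨s.torfG.of_injective hN.1 hM f hf,
      fun S hS i hi => hN.2 S hS (f.comp i) (hf.comp hi)⟩

theorem psi_inter (s : PerpSetup C G P) (hH : IsTorfIn Λ (G ∩ P) H) : psi G P H ∩ (G ∩ P) = H := by
  ext M
  constructor
  · rintro ⟨hM, hMJ⟩
    exact hM.2 M hMJ.2 LinearMap.id injective_id
  · intro hM
    have hMJ := hH.1 hM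
    refine ⟨⟨hMJ.1, fun S hS i hi => ?_⟩, hMJ⟩
    exact hH.2.2.2 S M ⟨s.torfG.of_injective hMJ.1 (s.fin hS) i hi, hS⟩ hM ⟨i, hi⟩

theorem inter_psi (s : PerpSetup C G P) {F : Set (Mdl Λ)} (hF : IsTorf Λ F) (hCF : C ⊆ F)
    (hFG : F ⊆ G) :
    psi G P (F ∩ (G ∩ P)) = F := by
  ext M
  constructor
  · rintro ⟨hMG, hM⟩
    obtain ⟨N, hN, hN'⟩ := s.dec M (s.torfG.1 hMG)
    exact hF.2.2.1 _ M _ _ _ (isSESeq_mkQ N) (hM _ hN N.subtype N.subtype_injective).1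
      (hCF hN') (s.torfG.1 hMG)
  · intro hM
    refine ⟨hFG hM, fun S hS i hi => ?_⟩
    have hSF := hF.of_injective hM (s.fin hS) i hi
    exact ⟨hSF, hFG hSF, hS⟩

theorem inter_subset_iff (s : PerpSetup C G P) {F F' : Set (Mdl Λ)} (hF : IsTorf Λ F)
    (hCF : C ⊆ F) (hFG : F ⊆ G)
    (hF' : IsTorf Λ F') (hCF' : C ⊆ F') (hFG' : F' ⊆ G) :
    F ∩ (G ∩ P) ⊆ F' ∩ (G ∩ P) ↔ F ⊆ F' := by
  refine ⟨fun h => ?_, fun h => Set.inter_subset_inter_left _ h⟩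
  rw [← s.inter_psi hF hCF hFG, ← s.inter_psi hF' hCF' hFG']
  exact psi_mono h

theorem inter_inj (s : PerpSetup C G P) {F F' : Set (Mdl Λ)} (hF : IsTorf Λ F) (hCF : C ⊆ F)
    (hFG : F ⊆ G)
    (hF' : IsTorf Λ F') (hCF' : C ⊆ F') (hFG' : F' ⊆ G) :
    F ∩ (G ∩ P) = F' ∩ (G ∩ P) ↔ F = F' := by
  refine ⟨fun h => ?_, fun h => h ▸ rfl⟩
  rw [← s.inter_psi hF hCF hFG, ← s.inter_psi hF' hCF' hFG', h]

theorem ssubset_psi (s : PerpSetup C G P) {F : Set (Mdl Λ)} (hF : IsTorf Λ F) (hCF : C ⊆ F)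
    (hFG : F ⊆ G)
    (hH : IsTorfIn Λ (G ∩ P) H) (h : F ∩ (G ∩ P) ⊂ H) : F ⊂ psi G P H := by
  rw [ssubset_iff_subset_ne] at h ⊢
  refine ⟨(s.inter_psi hF hCF hFG).symm.trans_subset (psi_mono h.1), fun h' => h.2 ?_⟩
  rw [h', s.psi_inter hH]

theorem covers_inter (s : PerpSetup C G P) [IsNoetherianRing Λ] {F F' : Set (Mdl Λ)}
    (hF' : F' ⊆ G) (hCF : C ⊆ F)
    (h : CoversIn Λ (modAll Λ) F' F) : CoversIn Λ (G ∩ P) (F' ∩ (G ∩ P)) (F ∩ (G ∩ P)) := by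
  obtain ⟨t, t', hlt, hcov⟩ := h
  have hFG := hlt.1.trans hF'
  have hCF' := hCF.trans hlt.1
  refine ⟨s.inter_torf t, s.inter_torf t', ?_, fun H hH h1 h2 => ?_⟩
  · rw [ssubset_iff_subset_ne]
    exact ⟨Set.inter_subset_inter_left _ hlt.1,
      fun he => hlt.ne ((s.inter_inj t hCF hFG t' hCF' hF').1 he)⟩
  · have h3 := hcov (psi G P H) (s.psi_torf hH) (s.ssubset_psi t hCF hFG hH h1)
      ((psi_mono h2).trans (s.inter_psi t' hCF' hF').subset)
    rw [← h3, s.psi_inter hH]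

theorem covers_psi (s : PerpSetup C G P) [IsNoetherianRing Λ] {F : Set (Mdl Λ)} (hF : IsTorf Λ F)
    (hCF : C ⊆ F)
    (hFG : F ⊆ G) (h : CoversIn Λ (G ∩ P) H (F ∩ (G ∩ P))) :
    CoversIn Λ (modAll Λ) (psi G P H) F := by
  obtain ⟨_, t', hlt, hcov⟩ := h
  refine ⟨hF, s.psi_torf t', s.ssubset_psi hF hCF hFG t' hlt, fun F' hF' h1 h2 => ?_⟩
  have hFG' : F' ⊆ G := h2.trans psi_le
  have hCF' := hCF.trans h1.1
  have h3 := hcov (F' ∩ (G ∩ P)) (s.inter_torf hF') (by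
    rw [ssubset_iff_subset_ne]
    exact ⟨Set.inter_subset_inter_left _ h1.1,
      fun he => h1.ne ((s.inter_inj hF hCF hFG hF' hCF' hFG').1 he)⟩)
    ((Set.inter_subset_inter_left _ h2).trans (s.psi_inter t').subset)
  rw [← h3, s.inter_psi hF' hCF' hFG']

theorem pop_torf (s : PerpSetup C G P) {F : Set (Mdl Λ)}
    (hFG : F ⊆ G) : IsTorf Λ (popIn Λ (modAll Λ) G F) := by
  have hG : G ∈ {H | IsTorfIn Λ (modAll Λ) H ∧ F ⊆ H ∧
      ∀ F', CoversIn Λ (modAll Λ) F' F → F' ⊆ G → F' ⊆ H} := ⟨s.torfG, hFG, fun _ _ h => h⟩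
  refine ⟨fun M hM => s.torfG.1 (hM G hG), ?_, ?_, ?_⟩
  · have hZ0 : Subsingleton (ModuleCat.of Λ PUnit.{1}) := inferInstanceAs (Subsingleton PUnit)
    exact ⟨_, fun H hH => IsTorf.of_subsingleton hH.1 _ hZ0, hZ0⟩
  · intro A E B f g hfg hA hB hE H hH
    exact hH.1.2.2.1 A E B f g hfg (hA H hH) (hB H hH) hE
  · intro M N hM hN hf H hH
    exact hH.1.2.2.2 M N hM (hN H hH) hf

theorem pop_inter (s : PerpSetup C G P) [IsNoetherianRing Λ] {F : Set (Mdl Λ)} (hF : IsTorf Λ F)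
    (hCF : C ⊆ F)
    (hFG : F ⊆ G) :
    popIn Λ (G ∩ P) (G ∩ P) (F ∩ (G ∩ P)) = popIn Λ (modAll Λ) G F ∩ (G ∩ P) := by
  ext M
  constructor
  · intro hM
    have hJ : IsTorfIn Λ (G ∩ P) (G ∩ P) := by
      have := s.inter_torf s.torfG
      rwa [← Set.inter_assoc, Set.inter_self] at this
    refine ⟨fun H hH => ?_, hM _ ⟨hJ, Set.inter_subset_right, fun _ _ h => h⟩⟩
    refine (hM (H ∩ (G ∩ P)) ⟨s.inter_torf hH.1, Set.inter_subset_inter_left _ hH.2.1,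
      fun F' hF' _ => ?_⟩).1
    rw [← s.psi_inter hF'.2.1]
    exact Set.inter_subset_inter_left _ (hH.2.2 _ (s.covers_psi hF hCF hFG hF') psi_le)
  · rintro ⟨hM, hMJ⟩ H hH
    rw [← s.psi_inter hH.1]
    refine ⟨hM _ ⟨s.psi_torf hH.1, ?_, fun F' hF' hF'G => ?_⟩, hMJ⟩
    · exact (s.inter_psi hF hCF hFG).symm.trans_subset (psi_mono hH.2.1)
    · refine (s.inter_psi hF'.2.1 (hCF.trans hF'.2.2.1.1) hF'G).symm.trans_subset (psi_mono ?_)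
      exact hH.2.2 _ (s.covers_inter hF'G hCF hF') Set.inter_subset_right

/-- Being a maximal join interval transfers along `F ↦ F ∩ J`. -/
theorem maxJoin_iff (s : PerpSetup C G P) [IsNoetherianRing Λ] {F F' : Set (Mdl Λ)}
    (hF : IsTorf Λ F)
    (hF' : IsTorf Λ F') (hle : F ⊆ F') (hCF : C ⊆ F) (hFG' : F' ⊆ G) :
    IsMaxJoinIn Λ (modAll Λ) F F' C G ↔
      IsMaxJoinIn Λ (G ∩ P) (F ∩ (G ∩ P)) (F' ∩ (G ∩ P)) (zeroSubcat Λ) (G ∩ P) := by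
  have hFG := hle.trans hFG'
  have hpop : popIn Λ (modAll Λ) G F ⊆ G :=
    fun M hM => hM G ⟨s.torfG, hFG, fun _ _ h => h⟩
  have hCpop : C ⊆ popIn Λ (modAll Λ) G F := fun M hM H hH => hH.2.1 (hCF hM)
  have key := s.inter_inj hF' (hCF.trans hle) hFG' (s.pop_torf hFG) hCpop hpop
  have hzero : zeroSubcat Λ ⊆ F ∩ (G ∩ P) := by
    intro M hM
    have hM' : Subsingleton M := hM
    obtain ⟨Z, hZ, _⟩ := (s.inter_torf hF).2.1
    exact ⟨hF.of_subsingleton M hM', s.torfG.of_subsingleton M hM',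
      s.quot hZ.2.2 0 (surjective_to_subsingleton _)⟩
  constructor
  · rintro ⟨_, _, _, _, _, h⟩
    exact ⟨s.inter_torf hF, s.inter_torf hF', hzero, Set.inter_subset_inter_left _ hle,
      Set.inter_subset_right, by rw [s.pop_inter hF hCF hFG]; exact key.2 h⟩
  · rintro ⟨_, _, _, _, _, h⟩
    rw [s.pop_inter hF hCF hFG] at h
    exact ⟨hF, hF', hCF, hle, hFG', key.1 h⟩

end PerpSetup

end Torf

end Paper

namespace Paper

/-! ### Transfer of functorial finiteness -/

section FunctFin

variable {Λ : Type} [Ring Λ]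

namespace PerpSetup

variable {C G P : Set (Mdl Λ)}

theorem factors_torsion (s : PerpSetup C G P) {M E : Mdl Λ} (hM : M ∈ P) {N : Submodule Λ E}
    (hN : ModuleCat.of Λ (E ⧸ N) ∈ C) (f : M →ₗ[Λ] E) (x : M) : f x ∈ N :=
  (Submodule.Quotient.mk_eq_zero N).1
    (LinearMap.congr_fun (s.hom (N := ModuleCat.of Λ (E ⧸ N)) hM hN (N.mkQ.comp f)) x)

/-- Restricting right `F`-approximations to their torsion submodules gives right
`F ∩ J`-approximations. -/
theorem covFin_inter (s : PerpSetup C G P) [IsNoetherianRing Λ] {F B : Set (Mdl Λ)}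
    (hF : IsTorf Λ F) (hFG : F ⊆ G) (h : CovFinIn Λ F B) : CovFinIn Λ (F ∩ (G ∩ P)) B := by
  intro M hM
  obtain ⟨E, hE, p, hp⟩ := h M hM
  have hEf : Module.Finite Λ E := hF.1 hE
  obtain ⟨N, hN, hN'⟩ := s.dec E hEf
  have hNF : ModuleCat.of Λ N ∈ F := hF.of_injective hE (s.fin hN) N.subtype N.subtype_injective
  refine ⟨ModuleCat.of Λ N, ⟨hNF, hFG hNF, hN⟩, p.comp N.subtype, fun D hD f => ?_⟩
  obtain ⟨g, hg⟩ := hp D hD.1 f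
  exact ⟨g.codRestrict N (s.factors_torsion hD.2.2 hN' g), hg⟩

/-- Right `F`-approximations from those of `F ∩ J` and of `C`: given a right
`F ∩ J`-approximation `a : A → M` and an embedding `A → I` into an injective, pull back a right
`C`-approximation of `(M × I) ⧸ A` along the projection. -/
theorem covFin_of_inter (s : PerpSetup C G P) [IsNoetherianRing Λ]
    (hinj : ∀ M : Mdl Λ, Module.Finite Λ M → ∃ (I : Mdl Λ) (i : M →ₗ[Λ] I),
      Module.Finite Λ I ∧ Module.Injective Λ I ∧ Injective i)
    (hC : CovFin Λ C) (hG : CovFin Λ G) {F : Set (Mdl Λ)} (hF : IsTorf Λ F) (hCF : C ⊆ F)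
    (hFG : F ⊆ G) (h : CovFinIn Λ (F ∩ (G ∩ P)) (G ∩ P)) : CovFin Λ F := by
  intro M hM
  have hMf : Module.Finite Λ M := hM
  obtain ⟨A, hA, a, ha⟩ : ∃ A ∈ F ∩ (G ∩ P), ∃ a : A →ₗ[Λ] M, ∀ D ∈ F ∩ (G ∩ P),
      ∀ f : D →ₗ[Λ] M, ∃ g : D →ₗ[Λ] A, a.comp g = f := by
    have hGi := s.covFin_inter s.torfG subset_rfl hG
    obtain ⟨T, hT, t, ht⟩ := hGi M hM
    obtain ⟨A, hA, a, ha⟩ := h T hT.2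
    refine ⟨A, hA, t.comp a, fun D hD f => ?_⟩
    obtain ⟨g, hg⟩ := ht D ⟨hD.2.1, hD.2⟩ f
    obtain ⟨g', hg'⟩ := ha D hD g
    exact ⟨g', by rw [LinearMap.comp_assoc, hg', hg]⟩
  obtain ⟨I, ι, hIf, hI, hι⟩ := hinj A (hF.1 hA.1)
  let R : Submodule Λ (M × I) := LinearMap.range (a.prod ι)
  obtain ⟨B, hB, b, hb⟩ := hC (ModuleCat.of Λ ((M × I) ⧸ R))
    (inferInstanceAs (Module.Finite Λ ((M × I) ⧸ R)))
  have hBf : Module.Finite Λ B := s.torfC.1 hB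
  let b' : B →ₗ[Λ] (M × I) ⧸ R := b
  let E : Submodule Λ ((M × I) × B) := LinearMap.eqLocus
    (R.mkQ.comp (LinearMap.fst Λ (M × I) B)) (b'.comp (LinearMap.snd Λ (M × I) B))
  have hEmem : ∀ p : E, R.mkQ p.1.1 = b' p.1.2 := fun p => p.2
  have hmk : ∀ x, R.mkQ (a x, ι x) = 0 := fun x => (Submodule.Quotient.mk_eq_zero R).2 ⟨x, rfl⟩
  let f : A →ₗ[Λ] E := (LinearMap.prod (a.prod ι) 0).codRestrict E (fun x => by
    change R.mkQ (a x, ι x) = b' 0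
    rw [map_zero, hmk])
  let g : E →ₗ[Λ] B := (LinearMap.snd Λ (M × I) B).comp E.subtype
  have hses : IsSESeq Λ (A := A) (E := ModuleCat.of Λ E) (B := B) f g := by
    refine ⟨fun x y hxy => hι (congrArg (fun p : E => p.1.1.2) hxy), fun y => ?_, ?_⟩
    · obtain ⟨q, hq⟩ := R.mkQ_surjective (b' y)
      exact ⟨⟨(q, y), hq⟩, rfl⟩
    · ext p
      constructor
      · rintro ⟨x, rfl⟩
        rfl
      · intro hp
        have hp0 : p.1.2 = 0 := hp
        have h1 := hEmem p
        rw [hp0, map_zero] at h1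
        obtain ⟨x, hx⟩ := (Submodule.Quotient.mk_eq_zero R).1 h1
        exact ⟨x, Subtype.ext (Prod.ext hx hp0.symm)⟩
  refine ⟨ModuleCat.of Λ E, hF.2.2.1 A (ModuleCat.of Λ E) B f g hses hA.1 (hCF hB)
    (inferInstanceAs (Module.Finite Λ E)),
    (LinearMap.fst Λ M I).comp ((LinearMap.fst Λ (M × I) B).comp E.subtype), fun D hD φ => ?_⟩
  have hDf : Module.Finite Λ D := hF.1 hD
  obtain ⟨N, hN, hN'⟩ := s.dec D hDf
  have hNF : ModuleCat.of Λ N ∈ F := hF.of_injective hD (s.fin hN) N.subtype N.subtype_injective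
  obtain ⟨u, hu⟩ := ha (ModuleCat.of Λ N) ⟨hNF, hFG hNF, hN⟩ (φ.comp N.subtype)
  let u' : N →ₗ[Λ] A := u
  have hu' : ∀ x : N, a (u' x) = φ x := LinearMap.congr_fun hu
  obtain ⟨w, hw⟩ := hI.out N.subtype N.subtype_injective (ι.comp u')
  have hw' : ∀ x : N, w x = ι (u' x) := hw
  obtain ⟨v, hv⟩ := factor_surj N.mkQ N.mkQ_surjective (R.mkQ.comp (φ.prod w)) (by
    intro x hx
    have hxN : x ∈ N := (Submodule.Quotient.mk_eq_zero N).1 hx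
    have h1 : φ.prod w x = (a (u' ⟨x, hxN⟩), ι (u' ⟨x, hxN⟩)) :=
      Prod.ext (hu' ⟨x, hxN⟩).symm (hw' ⟨x, hxN⟩)
    rw [LinearMap.comp_apply, h1, hmk])
  obtain ⟨z, hz⟩ := hb (ModuleCat.of Λ (D ⧸ N)) hN' v
  let z' : (D ⧸ N) →ₗ[Λ] B := z
  refine ⟨((φ.prod w).prod (z'.comp N.mkQ)).codRestrict E (fun x => ?_), rfl⟩
  change R.mkQ (φ.prod w x) = b' (z' (N.mkQ x))
  exact (hv x).symm.trans (LinearMap.congr_fun hz (N.mkQ x)).symm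

/-- For a torsion-free class between `C` and `G`, functorial finiteness in `mod Λ` and that of
its trace on `J` are equivalent; left approximations exist on both sides in any case. -/
theorem functFin_iff (s : PerpSetup C G P) [IsNoetherianRing Λ] [IsArtinianRing Λ]
    (hinj : ∀ M : Mdl Λ, Module.Finite Λ M → ∃ (I : Mdl Λ) (i : M →ₗ[Λ] I),
      Module.Finite Λ I ∧ Module.Injective Λ I ∧ Injective i)
    (hC : CovFin Λ C) (hG : CovFin Λ G) {F : Set (Mdl Λ)} (hF : IsTorf Λ F) (hCF : C ⊆ F)
    (hFG : F ⊆ G) :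
    FunctFin Λ F ↔ FunctFinIn Λ (F ∩ (G ∩ P)) (G ∩ P) := by
  have hJ : G ∩ P ⊆ modAll Λ := fun M hM => s.torfG.1 hM.1
  constructor
  · rintro ⟨_, h⟩
    refine ⟨hF.contraFinIn _ _ hJ fun M hM N hN => ⟨hFG hN, s.quot hM.2 N.mkQ N.mkQ_surjective⟩,
      s.covFin_inter hF hFG fun M hM => h M (hJ hM)⟩
  · rintro ⟨_, h⟩
    refine ⟨?_, s.covFin_of_inter hinj hC hG hF hCF hFG h⟩
    have := hF.contraFinIn Set.univ _ subset_rfl fun M hM N hN => trivial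
    rwa [Set.inter_univ] at this

end PerpSetup

/-- The three classes attached to `X` fit the abstract setup, given a minimal injective
copresentation; `hle` is the `τ⁻¹`-rigidity of `X`. -/
theorem perpSetup (K : Type) [Field K] [Algebra K Λ] [FiniteDimensional K Λ] {X I₀ I₁ : Mdl Λ}
    [Module.Finite Λ X] {ι : X →ₗ[Λ] I₀} {π : I₀ →ₗ[Λ] I₁} (hc : IsCopres ι π)
    (hle : Cogen Λ X ⊆ perpTauInv Λ X) :
    PerpSetup (Cogen Λ X) (perpTauInv Λ X) (perpL Λ (addOf Λ X)) := by
  have : IsNoetherianRing Λ := IsNoetherianRing.of_finite K Λ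
  have : IsArtinianRing Λ := IsArtinianRing.of_finite K Λ
  have hZ0 : Subsingleton (ModuleCat.of Λ PUnit.{1}) := inferInstanceAs (Subsingleton PUnit)
  have hZ : ModuleCat.of Λ PUnit.{1} ∈ Cogen Λ X :=
    (mem_cogen_iff K).2 ⟨Module.Finite.of_finite, fun m _ => Subsingleton.elim _ _⟩
  have hXX : X ∈ Cogen Λ X := (mem_cogen_iff K).2 ⟨inferInstance, fun m h => h LinearMap.id⟩
  have hC : IsTorf Λ (Cogen Λ X) := by
    refine ⟨fun M hM => hM.1, ⟨_, hZ, hZ0⟩, ?_, ?_⟩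
    · intro A E B f g hfg hA hB hE
      have hBl := ((mem_perpTauInv_iff hc).1 (hle hB)).2
      rw [mem_cogen_iff K] at hA hB ⊢
      refine ⟨hE, fun m hm => ?_⟩
      have hgm : g m = 0 := hB.2 _ fun u => hm (u.comp g)
      obtain ⟨x, rfl⟩ := (ses_exact hfg m).1 hgm
      rw [hA.2 x fun u => ?_, map_zero]
      obtain ⟨v, hv⟩ := hBl.extend hc f g hfg.1 hfg.2.1 (ses_exact hfg) u
      rw [← hv, hm]
    · rintro M N hM hN ⟨f, hf⟩
      rw [mem_cogen_iff K] at hN ⊢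
      refine ⟨hM, fun m hm => hf ?_⟩
      rw [map_zero]
      exact hN.2 _ fun u => hm (u.comp f)
  have hG : IsTorf Λ (perpTauInv Λ X) := by
    refine ⟨fun M hM => hM.1, ⟨_, hle hZ, hZ0⟩, ?_, ?_⟩
    · intro A E B f g hfg hA hB hE
      rw [mem_perpTauInv_iff hc] at hA hB ⊢
      exact ⟨hE, Lifts.extension hc f g hfg.1 hfg.2.1 (ses_exact hfg) hA.2 hB.2⟩
    · rintro M N hM hN ⟨f, hf⟩
      rw [mem_perpTauInv_iff hc] at hN ⊢
      exact ⟨hM, hN.2.of_injective hc f hf⟩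
  refine ⟨hC, hG, hle, ?_, fun M hM => hM.1, ?_, ?_, ?_⟩
  · intro M N hM f hf
    rw [mem_perpL_iff] at hM ⊢
    have := hM.1
    refine ⟨Module.Finite.of_surjective f hf, fun u => LinearMap.ext fun n => ?_⟩
    obtain ⟨m, rfl⟩ := hf n
    exact LinearMap.congr_fun (hM.2 (u.comp f)) m
  · intro M N hM hN f
    rw [mem_perpL_iff] at hM
    rw [mem_cogen_iff K] at hN
    exact LinearMap.ext fun m => hN.2 _ fun u => LinearMap.congr_fun (hM.2 (u.comp f)) m
  · intro A E B f g hfg hE hB hA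
    rw [mem_perpL_iff] at hE ⊢
    refine ⟨hA, fun u => LinearMap.ext fun x => ?_⟩
    obtain ⟨v, hv⟩ := ((mem_perpTauInv_iff hc).1 hB).2.extend hc f g hfg.1 hfg.2.1
      (ses_exact hfg) u
    rw [← hv, hE.2 v]; rfl
  · intro M hM
    obtain ⟨N, hN, hN0⟩ := hC.exists_torsion M hM
    exact ⟨N, mem_perpL_iff.2 ⟨inferInstanceAs (Module.Finite Λ N), fun f => hN0 X hXX f⟩, hN⟩

end FunctFin

end Paper


open Paper in
/-- Lemma: for a `τ⁻¹`-rigid module `X` and an interval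
`I = [Ilo, Ihi] ⊆ [Cogen X, (τ⁻¹X)^⊥]` in `torf (mod Λ)`, the following are
equivalent: (1) `I` is a functorially finite maximal join interval in
`[Cogen X, (τ⁻¹X)^⊥]`; (2) `[Ilo ∩ J^d(X), Ihi ∩ J^d(X)]` is a functorially
finite maximal join interval in `torf J^d(X)`. -/
theorem stmt_4 (K Λ : Type) [Field K] [Ring Λ] [Algebra K Λ] [FiniteDimensional K Λ]
    (hΛbasic : IsBasic Λ (ModuleCat.of Λ Λ))
    (X : Mdl Λ) (hX : TauInvRigid Λ X)
    (Ilo Ihi : Set (Mdl Λ))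
    (hIlo : IsTorf Λ Ilo) (hIhi : IsTorf Λ Ihi) (hle : Ilo ⊆ Ihi)
    (h1 : Cogen Λ X ⊆ Ilo) (h2 : Ihi ⊆ perpTauInv Λ X) :
    (IsMaxJoinIn Λ (modAll Λ) Ilo Ihi (Cogen Λ X) (perpTauInv Λ X) ∧
      FunctFin Λ Ilo ∧ FunctFin Λ Ihi) ↔
    (IsMaxJoinIn Λ (Jd Λ X) (Ilo ∩ Jd Λ X) (Ihi ∩ Jd Λ X)
        (zeroSubcat Λ) (Jd Λ X) ∧
      FunctFinIn Λ (Ilo ∩ Jd Λ X) (Jd Λ X) ∧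
      FunctFinIn Λ (Ihi ∩ Jd Λ X) (Jd Λ X)) := by
  have : IsNoetherianRing Λ := IsNoetherianRing.of_finite K Λ
  have : IsArtinianRing Λ := IsArtinianRing.of_finite K Λ
  have : Module.Finite Λ X := hX.1
  obtain ⟨I₀, I₁, ι, π, hc⟩ := exists_copres K X
  have hCG : Cogen Λ X ⊆ perpTauInv Λ X := h1.trans (hle.trans h2)
  have hXX : X ∈ Cogen Λ X := (mem_cogen_iff K).2 ⟨hX.1, fun m h => h LinearMap.id⟩
  have s := perpSetup K hc hCG
  have hG : CovFin Λ (perpTauInv Λ X) :=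
    covFin_perpTauInv K hc ((mem_perpTauInv_iff hc).1 (hCG hXX)).2
  have hinj : ∀ M : Mdl Λ, Module.Finite Λ M → ∃ (I : Mdl Λ) (i : M →ₗ[Λ] I),
      Module.Finite Λ I ∧ Module.Injective Λ I ∧ Injective i :=
    fun M _ => exists_inj_embedding K M
  exact and_congr (s.maxJoin_iff hIlo hIhi hle h1 h2) (and_congr
    (s.functFin_iff hinj (covFin_cogen K) hG hIlo h1 (hle.trans h2))
    (s.functFin_iff hinj (covFin_cogen K) hG hIhi (h1.trans hle) h2))
end
end

section
/- Let Λ be a finite-dimensional basic algebra, M := mod Λ, and let Δ = (X₁,…,X_m) be a cogen-preordered basic τ⁻¹-rigid module. Then t_{Δ_{>1}} X₁ is a cogen-minimal τ⁻¹-rigid module in the τ⁻¹-perpendicular category J^d(Δ_{>1}) (with respect to the inverse Auslander–Reiten translate of J^d(Δ_{>1})). -/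
/-!
Write `A = X₁` and `U = X₂ ⊕ … ⊕ X_m`, so that `Z = A ⊕ U` is basic and `τ⁻¹`-rigid, i.e.
`Ext¹(Y, Z) = 0` for all `Y ∈ Cogen Z`. For a module `M` let `rej U M` be the common kernel of all
maps `M → U`; it is functorial in `M`, and `M / rej U M ∈ Cogen U ⊆ Cogen Z`. Hence every map
from `rej U M` to a summand of `Z` extends to `M` (`extend_rej`). In particular
`Hom(rej U M, U) = 0`, so `rej U A` is the torsion submodule `t_U A` (`tSub_eq_rej`).

*Rigidity* (`tauInvRigidIn_rej`). Since `Cogen (t_U A) ⊆ Cogen Z`, the module `t_U A` lies in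
`J^d(U)`. If `0 → t_U A → E → Y → 0` is exact with `Y ∈ Cogen (t_U A) ∩ J^d(U)`, then
`Ext¹(Y, A) = 0` gives an extension `E → A` of the inclusion `t_U A → A`. Its composites with maps
`A → U` factor through `Y` and hence vanish, so `E → A` lands in `t_U A` and splits the sequence.

*Cogen-minimality* (`cogenMinimal_rej`). Suppose that an indecomposable summand `Y` of `t_U A` is
cogenerated by `W = t_U A / add Y`. By locality of the endomorphism ring of `Y` there are an
indecomposable summand `P` of `A` and a map `t_U P → Y`, the restriction of a projection
`t_U A → Y` that vanishes on `W`, which is a split epimorphism (`exists_indec_summand`). As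
endomorphisms of `t_U P` extend to the indecomposable `P`, Fitting's lemma shows that this map is
injective (`injective_of_comp`). Consequently `W` meets `P` trivially and so embeds into a
complement `C` of `P` in `A`; thus `t_U P` embeds into a power of `C`. Extending this embedding to
`P` and combining it with finitely many maps `P → U` having common kernel `t_U P` embeds `P` into
a power of `C ⊕ U`. Since `Z` is basic, `C ⊕ U` is `Z / add P` (`isDeleted_of_basic`), which
contradicts the cogen-preordering at `k = 1`.
-/

/- Framework: the category `mod Λ` of finitely generated modules over a
finite-dimensional algebra `Λ`, modeled concretely via `ModuleCat Λ` together
with the finiteness predicate `Module.Finite`.  Subcategories are sets of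
(bundled) modules.  `τ⁻¹`-rigidity and `(τ⁻¹X)^⊥` are encoded via the
Auslander–Smalø characterizations
`Hom(τ⁻¹X, M) = 0 ↔ Ext¹(M', X) = 0 for all M' ∈ Cogen M`. -/

open Function

noncomputable section

namespace Paper

section Helpers

variable {Λ : Type} [Ring Λ]

/-! ### Extending maps along `Ext¹`-acyclic cokernels -/

/-- If `0 → N → M → A → 0` is exact and `Ext¹(A, B) = 0`, then every map `N → B` extends to `M`:
the pushout of the sequence along `N → B` splits. -/
theorem extend_of_ext1Zero {A B N M : Mdl Λ} (h : Ext1Zero Λ A B)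
    (u : ↥N →ₗ[Λ] ↥M) (v : ↥M →ₗ[Λ] ↥A) (hs : IsSESeq Λ u v) (f : ↥N →ₗ[Λ] ↥B) :
    ∃ F : ↥M →ₗ[Λ] ↥B, F ∘ₗ u = f := by
  obtain ⟨hu, hv, huv⟩ := hs
  have hvu : ∀ x, v (u x) = 0 := fun x => by
    have : u x ∈ LinearMap.ker v := huv ▸ LinearMap.mem_range_self u x
    exact this
  let R : Submodule Λ (↥B × ↥M) := LinearMap.range (f.prod (-u))
  let E : Mdl Λ := ModuleCat.of Λ ((↥B × ↥M) ⧸ R)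
  let α : ↥B →ₗ[Λ] ↥E := R.mkQ ∘ₗ LinearMap.inl Λ ↥B ↥M
  let μ : ↥M →ₗ[Λ] ↥E := R.mkQ ∘ₗ LinearMap.inr Λ ↥B ↥M
  let β : ↥E →ₗ[Λ] ↥A := R.liftQ (v ∘ₗ LinearMap.snd Λ ↥B ↥M) (by
    rintro _ ⟨x, rfl⟩
    simp [hvu])
  have hβα : ∀ x, β (α x) = 0 := fun x => map_zero v
  have hβμ : ∀ x, β (μ x) = v x := fun x => rfl
  have hαμ : ∀ x, α (f x) = μ (u x) := fun x => by
    refine (Submodule.Quotient.eq R).2 ⟨x, ?_⟩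
    simp
  have hα : Injective α := by
    rw [← LinearMap.ker_eq_bot, LinearMap.ker_eq_bot']
    intro b hb
    obtain ⟨x, hx⟩ := (Submodule.Quotient.mk_eq_zero R).1 hb
    have h1 : f x = b := congrArg Prod.fst hx
    have h2 : -u x = 0 := congrArg Prod.snd hx
    have h3 : x = 0 := hu (by rw [map_zero]; exact neg_eq_zero.1 h2)
    rw [← h1, h3, map_zero]
  have hβ : Surjective β := fun a => by
    obtain ⟨x, rfl⟩ := hv a
    exact ⟨μ x, hβμ x⟩
  have hexact : LinearMap.range α = LinearMap.ker β := by
    apply le_antisymm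
    · rintro _ ⟨b, rfl⟩
      exact hβα b
    · intro e he
      obtain ⟨⟨b, x⟩, rfl⟩ := R.mkQ_surjective e
      have hx : v x = 0 := LinearMap.mem_ker.1 he
      obtain ⟨n, rfl⟩ : x ∈ LinearMap.range u := huv ▸ hx
      refine ⟨b + f n, ?_⟩
      rw [map_add, hαμ]
      change R.mkQ (b, 0) + R.mkQ (0, u n) = _
      rw [← map_add]
      simp
  obtain ⟨s, hs⟩ := h E α β ⟨hα, hβ, hexact⟩
  have hs' : ∀ a, β (s a) = a := fun a => LinearMap.congr_fun hs a
  -- `e ↦ e - s (β e)` takes values in the image of `α`, which gives the retraction `E → B`.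
  have hmem : ∀ e, (LinearMap.id - s ∘ₗ β : ↥E →ₗ[Λ] ↥E) e ∈ LinearMap.range α := fun e => by
    rw [hexact]
    simp [hs']
  let ρ : ↥E →ₗ[Λ] ↥B := (LinearEquiv.ofInjective α hα).symm.toLinearMap ∘ₗ
    (LinearMap.id - s ∘ₗ β).codRestrict (LinearMap.range α) hmem
  have hρ : ∀ b, ρ (α b) = b := fun b => by
    apply (LinearEquiv.ofInjective α hα).injective
    apply Subtype.ext
    simp [ρ, hβα]
  refine ⟨ρ ∘ₗ μ, LinearMap.ext fun x => ?_⟩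
  simp only [LinearMap.comp_apply]
  rw [← hαμ, hρ]

/-- A retraction of `0 → B → E → A → 0` yields a section. -/
theorem section_of_retraction {A B E : Mdl Λ} (f : ↥B →ₗ[Λ] ↥E) (g : ↥E →ₗ[Λ] ↥A)
    (hs : IsSESeq Λ f g) (r : ↥E →ₗ[Λ] ↥B) (hr : r ∘ₗ f = LinearMap.id) :
    ∃ s : ↥A →ₗ[Λ] ↥E, g.comp s = LinearMap.id := by
  obtain ⟨hf, hg, hfg⟩ := hs
  have hr' : ∀ x, r (f x) = x := fun x => LinearMap.congr_fun hr x
  have hgf : ∀ x, g (f x) = 0 := fun x => by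
    have : f x ∈ LinearMap.ker g := hfg ▸ LinearMap.mem_range_self f x
    exact this
  have hker : LinearMap.ker g ≤ LinearMap.ker (LinearMap.id - f ∘ₗ r : ↥E →ₗ[Λ] ↥E) := by
    intro x hx
    obtain ⟨b, rfl⟩ : x ∈ LinearMap.range f := hfg ▸ hx
    simp [hr']
  let e := g.quotKerEquivOfSurjective hg
  refine ⟨(LinearMap.ker g).liftQ _ hker ∘ₗ e.symm.toLinearMap, LinearMap.ext fun a => ?_⟩
  obtain ⟨x, rfl⟩ := hg a
  have : e.symm (g x) = (LinearMap.ker g).mkQ x := by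
    rw [LinearEquiv.symm_apply_eq]; rfl
  simp [this, hgf]

/-- `Ext¹(A, -) = 0` passes to direct summands. -/
theorem ext1Zero_of_isSummand {A B C : Mdl Λ} (h : Ext1Zero Λ A B) (hC : IsSummand Λ C B) :
    Ext1Zero Λ A C := by
  intro E f g hs
  obtain ⟨i, p, hip⟩ := hC
  obtain ⟨F, hF⟩ := extend_of_ext1Zero h f g hs i
  refine section_of_retraction f g hs (p ∘ₗ F) ?_
  rw [LinearMap.comp_assoc, hF, hip]

/-! ### Cogeneration by separating families of maps -/

theorem mem_cogen_of_family {M X : Mdl Λ} [Module.Finite Λ ↥M] {ι : Type} [Fintype ι]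
    (f : ι → (↥M →ₗ[Λ] ↥X)) (hf : ∀ x, (∀ k, f k x = 0) → x = 0) : M ∈ Cogen Λ X := by
  refine ⟨inferInstance, ModuleCat.of Λ (Fin (Fintype.card ι) → ↥X),
    ⟨_, LinearMap.id, LinearMap.id, rfl⟩,
    LinearMap.pi fun k => f ((Fintype.equivFin ι).symm k), ?_⟩
  rw [← LinearMap.ker_eq_bot, LinearMap.ker_eq_bot']
  intro x hx
  refine hf x fun k => ?_
  have h : f ((Fintype.equivFin ι).symm (Fintype.equivFin ι k)) x = 0 := congrFun hx _
  rwa [Equiv.symm_apply_apply] at h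

theorem exists_family_of_mem_cogen {M X : Mdl Λ} (h : M ∈ Cogen Λ X) :
    ∃ (n : ℕ) (f : Fin n → (↥M →ₗ[Λ] ↥X)), ∀ x, (∀ k, f k x = 0) → x = 0 := by
  obtain ⟨_, Y, ⟨n, i, p, hip⟩, f, hf⟩ := h
  refine ⟨n, fun k => LinearMap.proj k ∘ₗ i ∘ₗ f, fun x hx => hf ?_⟩
  have h0 : i (f x) = 0 := funext fun k => hx k
  have h1 := LinearMap.congr_fun hip (f x)
  rw [LinearMap.comp_apply, h0, map_zero] at h1
  rw [map_zero, ← LinearMap.id_apply (R := Λ) (f x), ← h1]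

theorem cogen_mono {M X Y : Mdl Λ} (h : M ∈ Cogen Λ X) (j : ↥X →ₗ[Λ] ↥Y) (hj : Injective j) :
    M ∈ Cogen Λ Y := by
  obtain ⟨n, f, hf⟩ := exists_family_of_mem_cogen h
  have : Module.Finite Λ ↥M := h.1
  exact mem_cogen_of_family (fun k => j ∘ₗ f k) fun x hx => hf x fun k => hj (by simpa using hx k)

/-! ### The submodule annihilated by all maps to `U` -/

/-- The reject of `U` in `M`: the common kernel of all maps `M → U`. It is functorial in `M`. -/
def rej (U M : Mdl Λ) : Submodule Λ ↥M := ⨅ f : ↥M →ₗ[Λ] ↥U, LinearMap.ker f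

theorem mem_rej {U M : Mdl Λ} {x : ↥M} : x ∈ rej U M ↔ ∀ f : ↥M →ₗ[Λ] ↥U, f x = 0 := by
  simp [rej]

theorem map_mem_rej {U M N : Mdl Λ} (g : ↥M →ₗ[Λ] ↥N) {x : ↥M} (hx : x ∈ rej U M) :
    g x ∈ rej U N :=
  mem_rej.2 fun f => mem_rej.1 hx (f ∘ₗ g)

/-- In an Artinian module, finitely many maps to `U` already cut out `rej U M`. -/
theorem exists_family_rej (U M : Mdl Λ) [IsArtinian Λ ↥M] :
    ∃ (n : ℕ) (f : Fin n → (↥M →ₗ[Λ] ↥U)), ∀ x, (∀ k, f k x = 0) → x ∈ rej U M := by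
  obtain ⟨N, ⟨n, f, rfl⟩, hmin⟩ := IsArtinian.set_has_minimal
    {N : Submodule Λ ↥M | ∃ (n : ℕ) (f : Fin n → (↥M →ₗ[Λ] ↥U)), N = ⨅ k, LinearMap.ker (f k)}
    ⟨_, 0, Fin.elim0, rfl⟩
  refine ⟨n, f, fun x hx => mem_rej.2 fun g => ?_⟩
  by_contra hg
  refine hmin (⨅ k, LinearMap.ker ((Fin.cons g f : Fin (n + 1) → (↥M →ₗ[Λ] ↥U)) k))
    ⟨n + 1, _, rfl⟩ (lt_of_le_of_ne (fun y hy => ?_) fun heq => hg ?_)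
  · simp only [Submodule.mem_iInf] at hy ⊢
    exact fun k => by simpa using hy k.succ
  · have hx' : x ∈ ⨅ k, LinearMap.ker (f k) := by simpa [Submodule.mem_iInf] using hx
    rw [← heq, Submodule.mem_iInf] at hx'
    simpa using hx' 0

/-- The quotient by the reject lies in `Cogen U`. -/
theorem quot_rej_mem_cogen (U M : Mdl Λ) [IsArtinian Λ ↥M] [Module.Finite Λ ↥M] :
    ModuleCat.of Λ (↥M ⧸ rej U M) ∈ Cogen Λ U := by
  obtain ⟨n, f, hf⟩ := exists_family_rej U M
  refine mem_cogen_of_family (M := ModuleCat.of Λ (↥M ⧸ rej U M))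
    (fun k => (rej U M).liftQ (f k) fun x hx => mem_rej.1 hx (f k)) fun x hx => ?_
  obtain ⟨y, rfl⟩ := (rej U M).mkQ_surjective x
  exact (Submodule.Quotient.mk_eq_zero _).2 (hf y fun k => hx k)

theorem isSESeq_rej (U M : Mdl Λ) :
    IsSESeq Λ (A := ModuleCat.of Λ ↥(rej U M)) (E := M) (B := ModuleCat.of Λ (↥M ⧸ rej U M))
      (rej U M).subtype (rej U M).mkQ :=
  ⟨Subtype.val_injective, (rej U M).mkQ_surjective, by simp⟩

/-- If `U` and `C` are summands of the `τ⁻¹`-rigid module `Z`, then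
maps `rej U M → C` extend to `M`, because `M / rej U M` lies in `Cogen U ⊆ Cogen Z`. -/
theorem extend_rej {U Z : Mdl Λ} (hZ : TauInvRigid Λ Z) (hU : IsSummand Λ U Z) {C : Mdl Λ}
    (hC : IsSummand Λ C Z) (M : Mdl Λ) [IsArtinian Λ ↥M] [Module.Finite Λ ↥M]
    (f : ↥(rej U M) →ₗ[Λ] ↥C) : ∃ F : ↥M →ₗ[Λ] ↥C, ∀ x : ↥(rej U M), F x = f x := by
  obtain ⟨i, p, hip⟩ := hU
  have hi : Injective i := LeftInverse.injective (g := p) fun x => LinearMap.congr_fun hip x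
  have hext := hZ.2 _ (cogen_mono (quot_rej_mem_cogen U M) i hi)
  obtain ⟨F, hF⟩ := extend_of_ext1Zero (ext1Zero_of_isSummand hext hC) _ _ (isSESeq_rej U M) f
  exact ⟨F, fun x => LinearMap.congr_fun hF x⟩

/-- For `U` a summand of a `τ⁻¹`-rigid module, the torsion submodule is the reject: a map
`rej U M → U` extends to `M`, hence vanishes. -/
theorem hom_rej_eq_zero {U Z : Mdl Λ} (hZ : TauInvRigid Λ Z) (hU : IsSummand Λ U Z)
    (M : Mdl Λ) [IsArtinian Λ ↥M] [Module.Finite Λ ↥M] (f : ↥(rej U M) →ₗ[Λ] ↥U) : f = 0 := by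
  obtain ⟨F, hF⟩ := extend_rej hZ hU hU M f
  ext x
  rw [← hF, mem_rej.1 x.2, LinearMap.zero_apply]

theorem tSub_eq_rej {U Z : Mdl Λ} (hZ : TauInvRigid Λ Z) (hU : IsSummand Λ U Z)
    (M : Mdl Λ) [IsArtinian Λ ↥M] [Module.Finite Λ ↥M] : tSub Λ U M = rej U M := by
  refine le_antisymm (sSup_le fun N hN x hx => mem_rej.2 fun f => ?_)
    (le_sSup fun f => hom_rej_eq_zero hZ hU M f)
  exact LinearMap.congr_fun (hN (f ∘ₗ N.subtype)) ⟨x, hx⟩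

/-! ### Indecomposable modules of finite length -/

/-- Fitting's lemma for an endomorphism of an indecomposable module. -/
theorem Indec.injective_or_nilpotent {M : Mdl Λ} [IsArtinian Λ ↥M] [IsNoetherian Λ ↥M]
    (hM : Indec Λ M) (f : Module.End Λ ↥M) : Injective f ∨ IsNilpotent f := by
  obtain ⟨n, hn, hn1⟩ := ((LinearMap.eventually_isCompl_ker_pow_range_pow f).and
    (Filter.eventually_ge_atTop 1)).exists
  rcases hM.2 (ModuleCat.of Λ ↥(LinearMap.ker (f ^ n))) (ModuleCat.of Λ ↥(LinearMap.range (f ^ n)))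
    ⟨(Submodule.prodEquivOfIsCompl _ _ hn).symm⟩ with h | h
  · left
    have hk : LinearMap.ker (f ^ n) = ⊥ := Submodule.subsingleton_iff_eq_bot.1 h
    rw [← LinearMap.ker_eq_bot, eq_bot_iff, ← hk]
    intro x hx
    obtain ⟨m, rfl⟩ := Nat.exists_eq_add_of_le' hn1
    rw [LinearMap.mem_ker, pow_succ, Module.End.mul_apply, LinearMap.mem_ker.1 hx, map_zero]
  · right
    have hr : LinearMap.range (f ^ n) = ⊥ := Submodule.subsingleton_iff_eq_bot.1 h
    exact ⟨n, LinearMap.range_eq_bot.1 hr⟩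

/-- The endomorphism ring of an indecomposable module of finite length is local. -/
theorem Indec.injective_add {M : Mdl Λ} [IsArtinian Λ ↥M] [IsNoetherian Λ ↥M]
    (hM : Indec Λ M) (f g : ↥M →ₗ[Λ] ↥M) (h : Injective (f + g)) :
    Injective f ∨ Injective g := by
  let e := LinearEquiv.ofBijective (f + g) (IsArtinian.bijective_of_injective_endomorphism _ h)
  let f' : Module.End Λ ↥M := e.symm.toLinearMap ∘ₗ f
  let g' : Module.End Λ ↥M := e.symm.toLinearMap ∘ₗ g
  have hfg : g' = 1 - f' := by
    ext x
    have : e.symm (f x + g x) = x := e.symm_apply_apply x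
    rw [map_add] at this
    exact eq_sub_of_add_eq' this
  have key : Injective f' ∨ Injective g' := by
    refine (hM.injective_or_nilpotent f').imp_right fun hn => ?_
    rw [hfg]
    exact ((Module.End.isUnit_iff _).1 hn.isUnit_one_sub).1
  exact key.imp (fun h => Injective.of_comp (f := e.symm) h)
    (fun h => Injective.of_comp (f := e.symm) h)

theorem Indec.injective_sum {M : Mdl Λ} [IsArtinian Λ ↥M] [IsNoetherian Λ ↥M]
    (hM : Indec Λ M) {ι : Type} (s : Finset ι) (f : ι → (↥M →ₗ[Λ] ↥M))
    (h : Injective (∑ k ∈ s, f k : ↥M →ₗ[Λ] ↥M)) : ∃ k, Injective (f k) := by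
  classical
  induction s using Finset.induction_on with
  | empty =>
    exfalso
    refine hM.1 ⟨fun x y => h ?_⟩
    simp
  | insert a s ha ih =>
    rw [Finset.sum_insert ha] at h
    rcases hM.injective_add _ _ h with h | h
    · exact ⟨a, h⟩
    · exact ih h

/-- A map `M → N → M` that is injective exhibits `M` as a summand of `N`. -/
theorem isSummand_of_injective_comp {M N : Mdl Λ} [IsArtinian Λ ↥M] (i : ↥M →ₗ[Λ] ↥N)
    (p : ↥N →ₗ[Λ] ↥M) (h : Injective (p ∘ₗ i)) : IsSummand Λ M N := by
  let e := LinearEquiv.ofBijective (p ∘ₗ i) (IsArtinian.bijective_of_injective_endomorphism _ h)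
  exact ⟨i, e.symm.toLinearMap ∘ₗ p, LinearMap.ext fun x => e.symm_apply_apply x⟩

/-- An indecomposable module in `add Y` is a summand of `Y`. -/
theorem Indec.isSummand_of_mem_addOf {V Y : Mdl Λ} [IsArtinian Λ ↥V] [IsNoetherian Λ ↥V]
    (hV : Indec Λ V) (h : V ∈ addOf Λ Y) : IsSummand Λ V Y := by
  obtain ⟨n, i, p, hip⟩ := h
  obtain ⟨k, hk⟩ := hV.injective_sum Finset.univ
    (fun k : Fin n => (p ∘ₗ LinearMap.single Λ (fun _ => ↥Y) k) ∘ₗ (LinearMap.proj k ∘ₗ i)) (by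
      have : ∑ k : Fin n, (p ∘ₗ LinearMap.single Λ (fun _ => ↥Y) k) ∘ₗ (LinearMap.proj k ∘ₗ i)
          = LinearMap.id := by
        rw [← hip]
        ext x
        have hx : i x = ∑ k, Pi.single k (i x k) := (Finset.univ_sum_single (i x)).symm
        rw [LinearMap.comp_apply, hx, map_sum]
        simp [LinearMap.sum_apply]
      rw [this]
      exact injective_id)
  exact isSummand_of_injective_comp _ _ hk

theorem finite_of_isSummand {M N : Mdl Λ} [Module.Finite Λ ↥N] (h : IsSummand Λ M N) :
    Module.Finite Λ ↥M := by
  obtain ⟨i, p, hip⟩ := h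
  exact Module.Finite.of_surjective p fun x => ⟨i x, LinearMap.congr_fun hip x⟩

theorem isSummand_trans {L M N : Mdl Λ} (h : IsSummand Λ L M) (h' : IsSummand Λ M N) :
    IsSummand Λ L N := by
  obtain ⟨i, p, hip⟩ := h
  obtain ⟨j, q, hjq⟩ := h'
  refine ⟨j ∘ₗ i, p ∘ₗ q, LinearMap.ext fun x => ?_⟩
  have h1 : q (j (i x)) = i x := LinearMap.congr_fun hjq (i x)
  have h2 : p (i x) = x := LinearMap.congr_fun hip x
  simp [h1, h2]

theorem self_mem_addOf (Y : Mdl Λ) : Y ∈ addOf Λ Y :=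
  ⟨1, LinearMap.pi fun _ => LinearMap.id, LinearMap.proj 0, rfl⟩

theorem mem_addOf_of_isSummand {V Y : Mdl Λ} (h : IsSummand Λ V Y) : V ∈ addOf Λ Y := by
  obtain ⟨n, hn⟩ := self_mem_addOf Y
  exact ⟨n, isSummand_trans h hn⟩

/-! ### Lifting summands of the reject to summands of the module -/

/-- The map induced by `f` on rejects. -/
def rejMap (U : Mdl Λ) {M N : Mdl Λ} (f : ↥M →ₗ[Λ] ↥N) : ↥(rej U M) →ₗ[Λ] ↥(rej U N) :=
  f.restrict fun _ hx => map_mem_rej f hx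

@[simp] theorem coe_rejMap (U : Mdl Λ) {M N : Mdl Λ} (f : ↥M →ₗ[Λ] ↥N) (x : ↥(rej U M)) :
    (rejMap U f x : ↥N) = f x := rfl

/-- If the indecomposable `Y` is a summand of `rej U A`, then it is already a summand of
`rej U P` for some indecomposable summand `P` of `A`. Here `P` is taken with minimal image in `A`:
were it to split as `S ⊕ T`, locality of the endomorphism ring of `Y` would allow
replacing it by `S` or by `T`. -/
theorem exists_indec_summand {U A Y : Mdl Λ} [IsArtinian Λ ↥A] [IsArtinian Λ ↥Y]
    [IsNoetherian Λ ↥Y] (hY : Indec Λ Y) (i : ↥Y →ₗ[Λ] ↥(rej U A)) (p : ↥(rej U A) →ₗ[Λ] ↥Y)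
    (hip : Injective (p ∘ₗ i)) :
    ∃ (P : Mdl Λ) (a : ↥P →ₗ[Λ] ↥A) (b : ↥A →ₗ[Λ] ↥P), Indec Λ P ∧ b ∘ₗ a = LinearMap.id ∧
      Injective (p ∘ₗ rejMap U (a ∘ₗ b) ∘ₗ i) := by
  obtain ⟨N, ⟨P, a, b, hba, rfl, hinj⟩, hmin⟩ := IsArtinian.set_has_minimal
    {N : Submodule Λ ↥A | ∃ (P : Mdl Λ) (a : ↥P →ₗ[Λ] ↥A) (b : ↥A →ₗ[Λ] ↥P),
      b ∘ₗ a = LinearMap.id ∧ LinearMap.range a = N ∧ Injective (p ∘ₗ rejMap U (a ∘ₗ b) ∘ₗ i)}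
    ⟨_, A, LinearMap.id, LinearMap.id, rfl, rfl, hip⟩
  have hba' : ∀ x, b (a x) = x := fun x => LinearMap.congr_fun hba x
  have ha : Injective a := LeftInverse.injective hba'
  refine ⟨P, a, b, ⟨fun hP => hY.1 ⟨fun x y => hinj ?_⟩, ?_⟩, hba, hinj⟩
  · have h0 : ∀ z, rejMap U (a ∘ₗ b) z = 0 := fun z => Subtype.ext <| by
      have : b z = 0 := hP.elim _ _
      simp [this]
    simp [h0]
  · rintro S T ⟨(e : ↥P ≃ₗ[Λ] ↥S × ↥T)⟩
    by_contra! hST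
    obtain ⟨hS, hT⟩ := hST
    let a₁ : ↥S →ₗ[Λ] ↥A := a ∘ₗ e.symm.toLinearMap ∘ₗ LinearMap.inl Λ ↥S ↥T
    let a₂ : ↥T →ₗ[Λ] ↥A := a ∘ₗ e.symm.toLinearMap ∘ₗ LinearMap.inr Λ ↥S ↥T
    let b₁ : ↥A →ₗ[Λ] ↥S := LinearMap.fst Λ ↥S ↥T ∘ₗ e.toLinearMap ∘ₗ b
    let b₂ : ↥A →ₗ[Λ] ↥T := LinearMap.snd Λ ↥S ↥T ∘ₗ e.toLinearMap ∘ₗ b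
    have h11 : b₁ ∘ₗ a₁ = LinearMap.id := LinearMap.ext fun x => by simp [a₁, b₁, hba']
    have h22 : b₂ ∘ₗ a₂ = LinearMap.id := LinearMap.ext fun x => by simp [a₂, b₂, hba']
    have h12 : ∀ x, b₁ (a₂ x) = 0 := fun x => by simp [a₂, b₁, hba']
    have h21 : ∀ x, b₂ (a₁ x) = 0 := fun x => by simp [a₁, b₂, hba']
    have hsum : a ∘ₗ b = a₁ ∘ₗ b₁ + a₂ ∘ₗ b₂ := LinearMap.ext fun x => by
      simp only [LinearMap.comp_apply, LinearMap.add_apply, a₁, a₂, b₁, b₂, ← map_add]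
      simp
    have hlt₁ : LinearMap.range a₁ < LinearMap.range a := by
      refine lt_of_le_of_ne (LinearMap.range_comp_le_range _ _) fun heq => hT ⟨fun x y => ?_⟩
      have h0 : ∀ t : ↥T, t = 0 := fun t => by
        obtain ⟨s, hs⟩ : a₂ t ∈ LinearMap.range a₁ :=
          heq ▸ LinearMap.mem_range_self a (e.symm (LinearMap.inr Λ ↥S ↥T t))
        have h1 := LinearMap.congr_fun h22 t
        rw [LinearMap.comp_apply, ← hs, h21] at h1
        exact h1.symm
      rw [h0 x, h0 y]
    have hlt₂ : LinearMap.range a₂ < LinearMap.range a := by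
      refine lt_of_le_of_ne (LinearMap.range_comp_le_range _ _) fun heq => hS ⟨fun x y => ?_⟩
      have h0 : ∀ t : ↥S, t = 0 := fun t => by
        obtain ⟨s, hs⟩ : a₁ t ∈ LinearMap.range a₂ :=
          heq ▸ LinearMap.mem_range_self a (e.symm (LinearMap.inl Λ ↥S ↥T t))
        have h1 := LinearMap.congr_fun h11 t
        rw [LinearMap.comp_apply, ← hs, h12] at h1
        exact h1.symm
      rw [h0 x, h0 y]
    have hdec : p ∘ₗ rejMap U (a ∘ₗ b) ∘ₗ i =
        p ∘ₗ rejMap U (a₁ ∘ₗ b₁) ∘ₗ i + p ∘ₗ rejMap U (a₂ ∘ₗ b₂) ∘ₗ i := by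
      have : rejMap U (a ∘ₗ b) = rejMap U (a₁ ∘ₗ b₁) + rejMap U (a₂ ∘ₗ b₂) :=
        LinearMap.ext fun x => Subtype.ext (LinearMap.congr_fun hsum x)
      rw [this, LinearMap.add_comp, LinearMap.comp_add]
    rcases hY.injective_add _ _ (hdec ▸ hinj) with h | h
    · exact hmin _ ⟨S, a₁, b₁, h11, rfl, h⟩ hlt₁
    · exact hmin _ ⟨T, a₂, b₂, h22, rfl, h⟩ hlt₂

/-- If `P` is an indecomposable summand of the `τ⁻¹`-rigid module `Z` and the composite
`Y → rej U P → Y` is injective with `Y` nonzero, then `rej U P → Y` is injective. Indeed the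
resulting idempotent of `rej U P` extends to an endomorphism of `P`, which by Fitting's lemma is
injective or nilpotent. -/
theorem injective_of_comp {U Z P Y : Mdl Λ} (hZ : TauInvRigid Λ Z) (hU : IsSummand Λ U Z)
    (hPZ : IsSummand Λ P Z) [IsArtinian Λ ↥P] [IsNoetherian Λ ↥P] [IsArtinian Λ ↥Y]
    (hP : Indec Λ P) (hY : ¬ IsZeroM Λ Y) (s : ↥Y →ₗ[Λ] ↥(rej U P)) (q : ↥(rej U P) →ₗ[Λ] ↥Y)
    (h : Injective (q ∘ₗ s)) : Injective q := by
  let e := LinearEquiv.ofBijective (q ∘ₗ s) (IsArtinian.bijective_of_injective_endomorphism _ h)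
  have he : ∀ y, e.symm (q (s y)) = y := fun y => e.symm_apply_apply y
  let ε : Module.End Λ ↥(rej U P) := s ∘ₗ e.symm.toLinearMap ∘ₗ q
  have hε : ∀ y, ε (s y) = s y := fun y => congrArg s (he y)
  obtain ⟨g, hg⟩ := extend_rej hZ hU hPZ P ((rej U P).subtype ∘ₗ ε)
  have hg' : ∀ x : ↥(rej U P), g x = (ε x : ↥P) := hg
  rcases hP.injective_or_nilpotent g with hi | ⟨n, hn⟩
  · intro x y hxy
    apply Subtype.ext
    apply hi
    rw [hg', hg']
    simp only [ε, LinearMap.comp_apply, hxy]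
  · exfalso
    have hpow : ∀ (k : ℕ) (y : ↥Y), (g ^ k) (s y : ↥P) = (s y : ↥P) := by
      intro k y
      induction k with
      | zero => rfl
      | succ k ih => rw [pow_succ, Module.End.mul_apply, hg', hε, ih]
    have hs : ∀ y, s y = 0 := fun y => Subtype.ext <| by
      rw [← hpow n y, hn]; rfl
    exact hY ⟨fun x y => h (by simp [hs])⟩

/-- Deleting an indecomposable summand `P` from a basic module `C ⊕ P` leaves `C`. -/
theorem isDeleted_of_basic {Z C P : Mdl Λ} [IsArtinianRing Λ] [Module.Finite Λ ↥Z]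
    (hb : IsBasic Λ Z) (e : ↥Z ≃ₗ[Λ] ↥C × ↥P) : IsDeleted Λ Z (addOf Λ P) C := by
  refine ⟨P, ⟨e⟩, fun V _ hV => mem_addOf_of_isSummand hV, fun V hV hVC hVP => ?_⟩
  obtain ⟨i, p, hip⟩ := hVC
  have hi : Injective (e.symm.toLinearMap ∘ₗ LinearMap.inl Λ ↥C ↥P ∘ₗ i) :=
    e.symm.injective.comp (LinearMap.inl_injective.comp
      (LeftInverse.injective (g := p) fun x => LinearMap.congr_fun hip x))
  have : IsArtinian Λ ↥V := isArtinian_of_injective _ hi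
  have : IsNoetherian Λ ↥V := isNoetherian_of_injective _ hi
  obtain ⟨j, q, hjq⟩ := hV.isSummand_of_mem_addOf hVP
  have h1 : ∀ x, p (i x) = x := fun x => LinearMap.congr_fun hip x
  have h2 : ∀ x, q (j x) = x := fun x => LinearMap.congr_fun hjq x
  let I : ↥V × ↥V →ₗ[Λ] ↥Z := e.symm.toLinearMap ∘ₗ i.prodMap j
  let J : ↥Z →ₗ[Λ] ↥V × ↥V := p.prodMap q ∘ₗ e.toLinearMap
  have hJI : J ∘ₗ I = LinearMap.id := LinearMap.ext fun x => by simp [I, J, h1, h2]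
  exact hb V hV.1 ⟨I, J, hJI⟩

/-- The splitting `A ≃ ker b × P` given by a retraction `b` of `a : P → A`. -/
def kerProdEquiv {A P : Mdl Λ} (a : ↥P →ₗ[Λ] ↥A) (b : ↥A →ₗ[Λ] ↥P) (hba : b ∘ₗ a = LinearMap.id) :
    ↥A ≃ₗ[Λ] ↥(LinearMap.ker b) × ↥P :=
  LinearEquiv.ofLinearMap
    (((LinearMap.id - a ∘ₗ b).codRestrict (LinearMap.ker b) fun x => by
      have h : b (a (b x)) = b x := LinearMap.congr_fun hba (b x)
      simp [h]).prod b)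
    ((LinearMap.ker b).subtype.coprod a)
    (by
      have h : ∀ x, b (a x) = x := fun x => LinearMap.congr_fun hba x
      refine LinearMap.ext fun ⟨x, y⟩ => ?_
      have hx : b x = 0 := x.2
      refine Prod.ext (Subtype.ext ?_) ?_ <;> simp [h, hx])
    (LinearMap.ext fun x => by simp)

theorem kerProdEquiv_fst {A P : Mdl Λ} (a : ↥P →ₗ[Λ] ↥A) (b : ↥A →ₗ[Λ] ↥P)
    (hba : b ∘ₗ a = LinearMap.id) (x : ↥A) :
    ((kerProdEquiv a b hba x).1 : ↥A) = x - a (b x) := rfl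

/-! ### The two halves of the theorem -/

/-- If `A` and `U` are summands of a `τ⁻¹`-rigid module, then `rej U A` is a `τ⁻¹`-rigid object of
`J^d(U)`. A retraction of an extension of `Y` by `rej U A` is found by extending the inclusion
`rej U A → A`; it lands in `rej U A` since `Hom(Y, U) = 0`. -/
theorem tauInvRigidIn_rej {A U Z : Mdl Λ} [IsArtinianRing Λ] [Module.Finite Λ ↥A]
    (hZ : TauInvRigid Λ Z) (hA : IsSummand Λ A Z) (hU : IsSummand Λ U Z) :
    TauInvRigidIn Λ (Jd Λ U) (ModuleCat.of Λ ↥(rej U A)) := by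
  have hext : ∀ N ∈ Cogen Λ (ModuleCat.of Λ ↥(rej U A)), Ext1Zero Λ N Z := fun N hN => by
    obtain ⟨i, p, hip⟩ := hA
    refine hZ.2 N (cogen_mono hN (i ∘ₗ (rej U A).subtype) ?_)
    exact (LeftInverse.injective (g := p) fun x => LinearMap.congr_fun hip x).comp
      Subtype.val_injective
  have hfin : Module.Finite Λ ↥(rej U A) := inferInstance
  refine ⟨⟨⟨hfin, fun N hN => ext1Zero_of_isSummand (hext N hN) hU⟩, hfin, ?_⟩, ?_⟩
  · rintro V ⟨n, i, p, hip⟩ f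
    refine LinearMap.ext fun x => ?_
    have h0 : i (f x) = 0 := funext fun k => LinearMap.congr_fun
      (hom_rej_eq_zero hZ hU A (LinearMap.proj k ∘ₗ i ∘ₗ f)) x
    have h1 := LinearMap.congr_fun hip (f x)
    rw [LinearMap.comp_apply, h0, map_zero] at h1
    exact h1.symm
  · rintro Y ⟨hYc, -, -, hYU⟩ E f g hs
    obtain ⟨F, hF⟩ := extend_of_ext1Zero (ext1Zero_of_isSummand (hext Y hYc) hA) f g hs
      (rej U A).subtype
    have hF' : ∀ x, F (f x) = (x : ↥A) := fun x => LinearMap.congr_fun hF x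
    -- Every map `E → A → U` kills `rej U A`, so it factors through `Y`, where it vanishes.
    have hFE : ∀ x, F x ∈ rej U A := fun x => mem_rej.2 fun (φ : ↥A →ₗ[Λ] ↥U) => by
      have hker : LinearMap.ker g ≤ LinearMap.ker (φ ∘ₗ F) := by
        rw [← hs.2.2]
        rintro _ ⟨y, rfl⟩
        rw [LinearMap.mem_ker, LinearMap.comp_apply, hF']
        exact mem_rej.1 y.2 φ
      have := hYU U (self_mem_addOf U)
        ((LinearMap.ker g).liftQ _ hker ∘ₗ (g.quotKerEquivOfSurjective hs.2.1).symm.toLinearMap)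
      have h2 := LinearMap.congr_fun this (g x)
      have h3 : (g.quotKerEquivOfSurjective hs.2.1).symm (g x) = (LinearMap.ker g).mkQ x := by
        rw [LinearEquiv.symm_apply_eq]; rfl
      rw [LinearMap.comp_apply, LinearEquiv.coe_coe, h3] at h2
      exact h2
    exact section_of_retraction f g hs (F.codRestrict _ hFE)
      (LinearMap.ext fun x => Subtype.ext (hF' x))

/-- Let `Z ≅ A ⊕ U` be basic and `τ⁻¹`-rigid such that no indecomposable summand `P` of `A` is
cogenerated by `Z / add P`. Then `rej U A` is cogen-minimal. -/
theorem cogenMinimal_rej {A U Z : Mdl Λ} [IsArtinianRing Λ]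
    (hb : IsBasic Λ Z) (hZ : TauInvRigid Λ Z) (e : ↥Z ≃ₗ[Λ] ↥A × ↥U)
    (hmin : ∀ P, Indec Λ P → IsSummand Λ P A → ∀ W, IsDeleted Λ Z (addOf Λ P) W →
      P ∉ Cogen Λ W) :
    CogenMinimal Λ (ModuleCat.of Λ ↥(rej U A)) := by
  have hAZ : IsSummand Λ A Z := ⟨e.symm.toLinearMap ∘ₗ LinearMap.inl Λ ↥A ↥U,
    LinearMap.fst Λ ↥A ↥U ∘ₗ e.toLinearMap, LinearMap.ext fun x => by simp⟩
  have hUZ : IsSummand Λ U Z := ⟨e.symm.toLinearMap ∘ₗ LinearMap.inr Λ ↥A ↥U,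
    LinearMap.snd Λ ↥A ↥U ∘ₗ e.toLinearMap, LinearMap.ext fun x => by simp⟩
  have := hZ.1
  have : Module.Finite Λ ↥A := finite_of_isSummand hAZ
  rintro Y hY ⟨(i : ↥Y →ₗ[Λ] ↥(rej U A)), (p : ↥(rej U A) →ₗ[Λ] ↥Y), hip⟩ Wd
    ⟨Z', ⟨(d : ↥(rej U A) ≃ₗ[Λ] ↥Wd × ↥Z')⟩, -, hWd⟩ hYW
  have : Module.Finite Λ ↥(rej U A) := inferInstance
  have hi : Injective i := LeftInverse.injective (g := p) fun x => LinearMap.congr_fun hip x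
  have : IsArtinian Λ ↥Y := isArtinian_of_injective i hi
  have : IsNoetherian Λ ↥Y := isNoetherian_of_injective i hi
  let π₁ : ↥(rej U A) →ₗ[Λ] ↥Wd := LinearMap.fst Λ ↥Wd ↥Z' ∘ₗ d.toLinearMap
  let π₂ : ↥(rej U A) →ₗ[Λ] ↥Z' := LinearMap.snd Λ ↥Wd ↥Z' ∘ₗ d.toLinearMap
  let ι₁ : ↥Wd →ₗ[Λ] ↥(rej U A) := d.symm.toLinearMap ∘ₗ LinearMap.inl Λ ↥Wd ↥Z'
  let ι₂ : ↥Z' →ₗ[Λ] ↥(rej U A) := d.symm.toLinearMap ∘ₗ LinearMap.inr Λ ↥Wd ↥Z'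
  have hι₁ : Injective ι₁ := d.symm.injective.comp LinearMap.inl_injective
  have hπι : ∀ w, π₂ (ι₁ w) = 0 := fun w => by simp [π₂, ι₁]
  have hsum : (p ∘ₗ ι₁) ∘ₗ (π₁ ∘ₗ i) + (p ∘ₗ ι₂) ∘ₗ (π₂ ∘ₗ i) = LinearMap.id := by
    rw [← hip]
    refine LinearMap.ext fun x => ?_
    simp only [LinearMap.add_apply, LinearMap.comp_apply, ← map_add, ι₁, ι₂, π₁, π₂]
    simp
  -- `Y` is not a summand of `Wd`, so the component of the identity through `Z'` is invertible.
  have hinj : Injective (((p ∘ₗ ι₂) ∘ₗ π₂) ∘ₗ i) := by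
    rcases hY.injective_add _ _ (by rw [hsum]; exact injective_id) with h | h
    · exact absurd (self_mem_addOf Y) (hWd Y hY (isSummand_of_injective_comp _ _ h))
    · exact h
  obtain ⟨P, a, b, hP, hba, hPinj⟩ := exists_indec_summand hY i ((p ∘ₗ ι₂) ∘ₗ π₂) hinj
  have hba' : ∀ x, b (a x) = x := fun x => LinearMap.congr_fun hba x
  have ha : Injective a := LeftInverse.injective hba'
  have : IsArtinian Λ ↥P := isArtinian_of_injective a ha
  have : IsNoetherian Λ ↥P := isNoetherian_of_injective a ha
  let q : ↥(rej U P) →ₗ[Λ] ↥Y := ((p ∘ₗ ι₂) ∘ₗ π₂) ∘ₗ rejMap U a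
  have hq : Injective q := injective_of_comp hZ hUZ (isSummand_trans ⟨a, b, hba⟩ hAZ) hP hY.1
    (rejMap U b ∘ₗ i) q hPinj
  let C : Mdl Λ := ModuleCat.of Λ ↥(LinearMap.ker b)
  let c := kerProdEquiv a b hba
  let γ : ↥A →ₗ[Λ] ↥C := LinearMap.fst Λ ↥(LinearMap.ker b) ↥P ∘ₗ c.toLinearMap
  have hCA : IsSummand Λ C A := ⟨c.symm.toLinearMap ∘ₗ LinearMap.inl Λ ↥(LinearMap.ker b) ↥P, γ,
    LinearMap.ext fun x => congrArg Prod.fst (c.apply_symm_apply (x, 0))⟩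
  -- `Wd` embeds into `C`: the map `q` is injective on `rej U P`, but vanishes on `Wd ∩ P`.
  have hWC : ∀ w, γ (ι₁ w : ↥A) = 0 → w = 0 := fun w hw => by
    have h1 : (ι₁ w : ↥A) = a (b (ι₁ w)) := by
      rw [← sub_eq_zero, ← kerProdEquiv_fst a b hba]
      exact congrArg Subtype.val hw
    have h2 : q (rejMap U b (ι₁ w)) = 0 := by
      have : rejMap U a (rejMap U b (ι₁ w)) = ι₁ w := Subtype.ext h1.symm
      simp only [q, LinearMap.comp_apply, this, hπι, map_zero]
    have h3 : rejMap U b (ι₁ w) = 0 := hq (by rw [h2, map_zero])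
    have h4 : b (ι₁ w) = 0 := congrArg Subtype.val h3
    apply hι₁
    rw [map_zero]
    apply Subtype.ext
    rw [h1, h4, map_zero]
    rfl
  obtain ⟨n, φ, hφ⟩ := exists_family_of_mem_cogen hYW
  have hext : ∀ k, ∃ F : ↥P →ₗ[Λ] ↥C, ∀ x : ↥(rej U P),
      F x = (γ ∘ₗ (rej U A).subtype ∘ₗ ι₁ ∘ₗ φ k ∘ₗ q) x := fun k =>
    extend_rej hZ hUZ (isSummand_trans hCA hAZ) P _
  choose F hF using hext
  obtain ⟨r, ψ, hψ⟩ := exists_family_rej U P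
  let CU : Mdl Λ := ModuleCat.of Λ (↥C × ↥U)
  let e' : ↥Z ≃ₗ[Λ] ↥CU × ↥P := e ≪≫ₗ c.prodCongr (LinearEquiv.refl Λ ↥U) ≪≫ₗ
    LinearEquiv.prodAssoc Λ _ _ _ ≪≫ₗ
    (LinearEquiv.refl Λ _).prodCongr (LinearEquiv.prodComm Λ _ _) ≪≫ₗ
    (LinearEquiv.prodAssoc Λ _ _ _).symm
  refine hmin P hP ⟨a, b, hba⟩ CU (isDeleted_of_basic hb e') ?_
  refine mem_cogen_of_family (ι := Fin n ⊕ Fin r)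
    (Sum.elim (fun k => LinearMap.inl Λ ↥C ↥U ∘ₗ F k) (fun k => LinearMap.inr Λ ↥C ↥U ∘ₗ ψ k))
    fun x hx => ?_
  have hxr : x ∈ rej U P := hψ x fun k =>
    LinearMap.inr_injective (R := Λ) (M := ↥C) ((hx (Sum.inr k)).trans (map_zero _).symm)
  have hx0 : q ⟨x, hxr⟩ = 0 := hφ _ fun k => hWC _ <| by
    have h1 : F k x = 0 :=
      LinearMap.inl_injective (R := Λ) (M₂ := ↥U) ((hx (Sum.inl k)).trans (map_zero _).symm)
    rw [← h1]
    exact (hF k ⟨x, hxr⟩).symm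
  exact congrArg Subtype.val (hq (hx0.trans (map_zero q).symm))

/-- The splitting `X₁ ⊕ … ⊕ X_m ≅ X₁ ⊕ (X₂ ⊕ … ⊕ X_m)`. -/
theorem exists_seqSum_equiv (X : ℕ → Mdl Λ) {m : ℕ} (hm : 1 ≤ m) :
    Nonempty (↥(seqSum Λ X 1 m) ≃ₗ[Λ] ↥(X 1) × ↥(seqSum Λ X 2 m)) := by
  have hmem : ∀ j : Finset.Icc 2 m, (j : ℕ) ∈ Finset.Icc 1 m := fun j => by
    have := Finset.mem_Icc.1 j.2
    exact Finset.mem_Icc.2 (by omega)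
  have hmem' : ∀ j : Finset.Icc 1 m, (j : ℕ) ≠ 1 → (j : ℕ) ∈ Finset.Icc 2 m := fun j hj => by
    have := Finset.mem_Icc.1 j.2
    exact Finset.mem_Icc.2 (by omega)
  let f : ((j : Finset.Icc 1 m) → ↥(X j.1)) →ₗ[Λ]
      ↥(X 1) × ((j : Finset.Icc 2 m) → ↥(X j.1)) :=
    LinearMap.prod (LinearMap.proj (R := Λ) (φ := fun j : Finset.Icc 1 m => ↥(X j.1))
        ⟨1, Finset.mem_Icc.2 ⟨le_rfl, hm⟩⟩)
      (LinearMap.pi fun j => LinearMap.proj (R := Λ)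
        (φ := fun j : Finset.Icc 1 m => ↥(X j.1)) ⟨j.1, hmem j⟩)
  refine ⟨LinearEquiv.ofBijective f ⟨?_, ?_⟩⟩
  · intro x y hxy
    funext ⟨j, hj⟩
    by_cases h1 : j = 1
    · subst h1
      exact congrArg Prod.fst hxy
    · exact congrFun (congrArg Prod.snd hxy) ⟨j, hmem' ⟨j, hj⟩ h1⟩
  · rintro ⟨x, y⟩
    refine ⟨fun j => if h : j.1 = 1 then cast (by rw [h]) x else y ⟨j.1, hmem' j h⟩, Prod.ext ?_ ?_⟩
    · simp [f]
    · funext ⟨j, hj⟩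
      have : j ≠ 1 := by
        have := Finset.mem_Icc.1 hj
        omega
      simp [f, this]

end Helpers

end Paper

open Paper in
/-- Corollary: if `Δ = (X 1, …, X m)` is a cogen-preordered basic
`τ⁻¹`-rigid module (with `m ≥ 1`), then `t_{Δ_{>1}} X₁` is a cogen-minimal
`τ⁻¹`-rigid module in the `τ⁻¹`-perpendicular category `J^d(Δ_{>1})`
(with respect to the inverse AR translate of `J^d(Δ_{>1})`). -/
theorem stmt_5 (K Λ : Type) [Field K] [Ring Λ] [Algebra K Λ] [FiniteDimensional K Λ]
    (hΛbasic : IsBasic Λ (ModuleCat.of Λ Λ))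
    (m : ℕ) (hm : 1 ≤ m) (X : ℕ → Mdl Λ) (hΔ : CogenPreordered Λ m X) :
    TauInvRigidIn Λ (Jd Λ (seqSum Λ X 2 m)) (tMod Λ (seqSum Λ X 2 m) (X 1)) ∧
    CogenMinimalIn Λ (Jd Λ (seqSum Λ X 2 m)) (tMod Λ (seqSum Λ X 2 m) (X 1)) := by

  have : IsArtinianRing Λ := IsArtinianRing.of_finite K Λ
  obtain ⟨hb, hZ, hmin⟩ := hΔ
  obtain ⟨e⟩ := exists_seqSum_equiv X hm
  set U := seqSum Λ X 2 m
  have hAZ : IsSummand Λ (X 1) (seqSum Λ X 1 m) := ⟨e.symm.toLinearMap ∘ₗ LinearMap.inl Λ ↥(X 1) ↥U,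
    LinearMap.fst Λ ↥(X 1) ↥U ∘ₗ e.toLinearMap, LinearMap.ext fun x => by simp⟩
  have hUZ : IsSummand Λ U (seqSum Λ X 1 m) := ⟨e.symm.toLinearMap ∘ₗ LinearMap.inr Λ ↥(X 1) ↥U,
    LinearMap.snd Λ ↥(X 1) ↥U ∘ₗ e.toLinearMap, LinearMap.ext fun x => by simp⟩
  have := hZ.1
  have : Module.Finite Λ ↥(X 1) := finite_of_isSummand hAZ
  have ht : tMod Λ U (X 1) = ModuleCat.of Λ ↥(rej U (X 1)) := by
    rw [tMod, tSub_eq_rej hZ hUZ]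
  rw [ht]
  refine ⟨tauInvRigidIn_rej hZ hAZ hUZ, fun Y hY hYs Wd hWd h => ?_⟩
  exact cogenMinimal_rej hb hZ e (hmin 1 le_rfl hm) Y hY hYs Wd hWd h.1
end
end

section
/- Let Λ be a finite-dimensional basic algebra, M := mod Λ, and let Δ = (X₁,…,X_m) be a preordered basic τ⁻¹-rigid module. Then Δ is cogen-preordered if and only if X_k = (I_s(Cogen Δ_{≥k}))/(Cogen Δ_{>k}) for all 1 ≤ k ≤ m. -/
/-!
Write `T = Δ_{≥k}` and `D = Δ_{>k}`, so that `T ≅ X_k ⊕ D`.  The point is that an indecomposable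
summand `Y` of the basic module `T ≅ Y ⊕ W` is split injective in `Cogen T` if and only if
`Y ∉ Cogen W`.

* If `Y` is split injective and embeds in a power of `W`, the embedding splits, so `Y` is a
  summand of `W` because `End Y` is local (`summand_of_splitInj`); this contradicts the fact that
  the summands in `add Y` have been deleted from `W`.
* If `Y ∉ Cogen W`, there is a nonzero `x ∈ Y` killed by all maps `Y → W`.  Choosing `x` such
  that it generates a minimal `End Y`-submodule, `x` is also killed by every non-invertible
  endomorphism.  Any embedding of `Y` into a power of `T` is nonzero at `x`, hence some component
  `Y → Y` of it is invertible and the embedding splits (`Indec.splitInj`).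

The direction from right to left is the first bullet.  For the other one, the second bullet shows
that `X_k` is split injective in `Cogen T`.  Writing `D ≅ A ⊕ B` with `A` a maximal split
injective summand (`AddClosed.exists_decomp`), the module `X_k ⊕ A` is `I_s(Cogen T)`, and
deleting the summands in `Cogen D` leaves exactly `X_k` since no indecomposable summand of `X_k`
lies in `Cogen D` (`exists_minSplitInj`).
-/

/- Framework: the category `mod Λ` of finitely generated modules over a
finite-dimensional algebra `Λ`, modeled concretely via `ModuleCat Λ` together
with the finiteness predicate `Module.Finite`.  Subcategories are sets of
(bundled) modules.  `τ⁻¹`-rigidity and `(τ⁻¹X)^⊥` are encoded via the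
Auslander–Smalø characterizations
`Hom(τ⁻¹X, M) = 0 ↔ Ext¹(M', X) = 0 for all M' ∈ Cogen M`. -/

open Function

noncomputable section

namespace Paper

variable {Λ : Type} [Ring Λ]

/-! ### Direct summands -/

theorem IsSummand.trans {A B C : Mdl Λ} (h : IsSummand Λ A B) (h' : IsSummand Λ B C) :
    IsSummand Λ A C := by
  obtain ⟨i, p, hp⟩ := h
  obtain ⟨j, q, hq⟩ := h'
  refine ⟨j.comp i, p.comp q, LinearMap.ext fun x => ?_⟩
  have h1 := LinearMap.congr_fun hq (i x)
  have h2 := LinearMap.congr_fun hp x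
  simp only [LinearMap.comp_apply, LinearMap.id_apply] at h1 h2 ⊢
  rw [h1, h2]

theorem IsoM.isSummand {A B : Mdl Λ} (h : IsoM Λ A B) : IsSummand Λ A B := by
  obtain ⟨e⟩ := h
  exact ⟨e.toLinearMap, e.symm.toLinearMap, LinearMap.ext fun x => by simp⟩

theorem IsoM.symm {A B : Mdl Λ} (h : IsoM Λ A B) : IsoM Λ B A := ⟨h.some.symm⟩

theorem IsoM.trans {A B C : Mdl Λ} (h : IsoM Λ A B) (h' : IsoM Λ B C) : IsoM Λ A C :=
  ⟨h.some.trans h'.some⟩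

theorem IsSummand.refl (A : Mdl Λ) : IsSummand Λ A A :=
  ⟨LinearMap.id, LinearMap.id, rfl⟩

theorem isSummand_left (A B : Mdl Λ) : IsSummand Λ A (dsum Λ A B) :=
  ⟨LinearMap.inl Λ A B, LinearMap.fst Λ A B, rfl⟩

theorem isSummand_right (A B : Mdl Λ) : IsSummand Λ B (dsum Λ A B) :=
  ⟨LinearMap.inr Λ A B, LinearMap.snd Λ A B, rfl⟩

theorem IsSummand.dsum {A B A' B' : Mdl Λ} (h : IsSummand Λ A A') (h' : IsSummand Λ B B') :
    IsSummand Λ (dsum Λ A B) (dsum Λ A' B') := by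
  obtain ⟨i, p, hp⟩ := h
  obtain ⟨j, q, hq⟩ := h'
  refine ⟨LinearMap.prodMap i j, LinearMap.prodMap p q, LinearMap.ext fun x => Prod.ext ?_ ?_⟩
  · exact LinearMap.congr_fun hp x.1
  · exact LinearMap.congr_fun hq x.2

theorem dsum_assoc (A B C : Mdl Λ) :
    IsoM Λ (dsum Λ (dsum Λ A B) C) (dsum Λ A (dsum Λ B C)) :=
  ⟨LinearEquiv.prodAssoc Λ A B C⟩

theorem IsoM.dsum {A B A' B' : Mdl Λ} (h : IsoM Λ A A') (h' : IsoM Λ B B') :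
    IsoM Λ (dsum Λ A B) (dsum Λ A' B') :=
  ⟨LinearEquiv.prodCongr h.some h'.some⟩

theorem IsoM.refl (A : Mdl Λ) : IsoM Λ A A := ⟨LinearEquiv.refl Λ A⟩

theorem IsSummand.exists_compl {A B : Mdl Λ} (h : IsSummand Λ A B) :
    ∃ A', IsoM Λ B (Paper.dsum Λ A A') := by
  obtain ⟨i, p, hp⟩ := h
  have hp' : ∀ x, p (i x) = x := fun x => LinearMap.congr_fun hp x
  let k : ↥B →ₗ[Λ] LinearMap.ker p :=
    (LinearMap.id - i.comp p).codRestrict _ fun x => by simp [hp']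
  refine ⟨ModuleCat.of Λ (LinearMap.ker p), ⟨LinearEquiv.ofBijective (p.prod k) ⟨?_, ?_⟩⟩⟩
  · refine (injective_iff_map_eq_zero _).2 fun x hx => ?_
    have h1 : p x = 0 := congrArg Prod.fst hx
    have h2 : x - i (p x) = 0 := congrArg Subtype.val (congrArg Prod.snd hx)
    simpa [h1] using h2
  · rintro ⟨a, ⟨b, hb⟩⟩
    have hb' : p b = 0 := hb
    refine ⟨i a + b, Prod.ext ?_ (Subtype.ext ?_)⟩
    · change p (i a + b) = a
      simp [hp', hb']
    · change (i a + b) - i (p (i a + b)) = b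
      simp [hp', hb']

theorem IsSummand.finite {A B : Mdl Λ} (h : IsSummand Λ A B) (hB : Module.Finite Λ B) :
    Module.Finite Λ A := by
  obtain ⟨i, p, hp⟩ := h
  exact Module.Finite.of_surjective p fun x => ⟨i x, LinearMap.congr_fun hp x⟩

theorem finite_dsum {A B : Mdl Λ} (hA : Module.Finite Λ A) (hB : Module.Finite Λ B) :
    Module.Finite Λ (dsum Λ A B) :=
  inferInstanceAs (Module.Finite Λ (↥A × ↥B))

theorem IsBasic.summand {A B : Mdl Λ} (hB : IsBasic Λ B) (h : IsSummand Λ A B) : IsBasic Λ A :=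
  fun N hN hNA => hB N hN (hNA.trans h)

/-- The power `Xⁿ`. -/
abbrev pw (n : ℕ) (X : Mdl Λ) : Mdl Λ := ModuleCat.of Λ (Fin n → ↥X)

theorem pw_succ (n : ℕ) (X : Mdl Λ) : IsoM Λ (pw (n + 1) X) (dsum Λ X (pw n X)) :=
  ⟨(Fin.consLinearEquiv Λ (fun _ : Fin (n + 1) => ↥X)).symm⟩

theorem pw_add (n k : ℕ) (X : Mdl Λ) : IsoM Λ (dsum Λ (pw n X) (pw k X)) (pw (n + k) X) := by
  induction n with
  | zero =>
    rw [Nat.zero_add]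
    exact ⟨LinearEquiv.uniqueProd⟩
  | succ n ih =>
    refine ((pw_succ n X).dsum (IsoM.refl _)).trans ((dsum_assoc _ _ _).trans ?_)
    rw [Nat.add_right_comm]
    exact ((IsoM.refl _).dsum ih).trans (pw_succ _ X).symm

/-! ### Additively closed classes -/

/-- A class of modules closed under zero objects, direct summands and finite direct sums. -/
structure AddClosed (P : Set (Mdl Λ)) : Prop where
  zero (M : Mdl Λ) : IsZeroM Λ M → M ∈ P
  summand (M N : Mdl Λ) : IsSummand Λ M N → N ∈ P → M ∈ P
  dsum (M N : Mdl Λ) : M ∈ P → N ∈ P → dsum Λ M N ∈ P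

theorem AddClosed.pw {P : Set (Mdl Λ)} (hP : AddClosed P) {M : Mdl Λ} (hM : M ∈ P) (n : ℕ) :
    pw n M ∈ P := by
  induction n with
  | zero => exact hP.zero _ (inferInstanceAs (Subsingleton (Fin 0 → ↥M)))
  | succ n ih => exact hP.summand _ _ (pw_succ n M).isSummand (hP.dsum _ _ hM ih)

theorem AddClosed.addOf_subset {P : Set (Mdl Λ)} (hP : AddClosed P) {M : Mdl Λ} (hM : M ∈ P) :
    addOf Λ M ⊆ P := fun _ ⟨n, hn⟩ => hP.summand _ _ hn (hP.pw hM n)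

theorem mem_addOf_of_summand {M X : Mdl Λ} (h : IsSummand Λ M X) : M ∈ addOf Λ X :=
  ⟨1, h.trans ((isSummand_left _ _).trans (pw_succ 0 X).symm.isSummand)⟩

theorem isSummand_of_isZero {M : Mdl Λ} (hM : IsZeroM Λ M) (N : Mdl Λ) : IsSummand Λ M N := by
  have : Subsingleton M := hM
  exact ⟨0, 0, LinearMap.ext fun x => Subsingleton.elim _ _⟩

theorem addClosed_addOf (X : Mdl Λ) : AddClosed (addOf Λ X) where
  zero M hM := ⟨0, isSummand_of_isZero hM _⟩
  summand M N h := fun ⟨n, hn⟩ => ⟨n, h.trans hn⟩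
  dsum M N := fun ⟨n, hn⟩ ⟨k, hk⟩ => ⟨n + k, (hn.dsum hk).trans (pw_add n k X).isSummand⟩

theorem addOf_mono {X Y : Mdl Λ} (h : IsSummand Λ X Y) : addOf Λ X ⊆ addOf Λ Y :=
  (addClosed_addOf Y).addOf_subset (mem_addOf_of_summand h)

theorem cogen_mono_s6 {X Y : Mdl Λ} (h : IsSummand Λ X Y) : Cogen Λ X ⊆ Cogen Λ Y :=
  fun _ ⟨hf, Z, hZ, f⟩ => ⟨hf, Z, addOf_mono h hZ, f⟩

theorem mem_cogen_iff_s6 {X M : Mdl Λ} : M ∈ Cogen Λ X ↔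
    Module.Finite Λ M ∧ ∃ (n : ℕ) (f : ↥M →ₗ[Λ] (Fin n → ↥X)), Injective f := by
  refine ⟨fun ⟨hf, Z, ⟨n, i, p, hp⟩, f, hi⟩ => ⟨hf, n, i.comp f, ?_⟩,
    fun ⟨hf, n, f, hi⟩ => ⟨hf, pw n X, ⟨n, IsSummand.refl _⟩, f, hi⟩⟩
  have : Injective i := fun a b h => by
    have := congrArg p h
    rwa [show p (i a) = a from LinearMap.congr_fun hp a,
      show p (i b) = b from LinearMap.congr_fun hp b] at this
  exact this.comp hi

theorem mem_cogen_of_injective {X M N : Mdl Λ} (hN : N ∈ Cogen Λ X) (hM : Module.Finite Λ M)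
    (f : ↥M →ₗ[Λ] ↥N) (hf : Injective f) : M ∈ Cogen Λ X := by
  obtain ⟨_, Z, hZ, g, hg⟩ := hN
  exact ⟨hM, Z, hZ, g.comp f, hg.comp hf⟩

theorem mem_cogen_of_addOf {X M : Mdl Λ} (hX : Module.Finite Λ X) (h : M ∈ addOf Λ X) :
    M ∈ Cogen Λ X := by
  obtain ⟨n, hn⟩ := h
  exact ⟨hn.finite (inferInstanceAs (Module.Finite Λ (Fin n → ↥X))), M, ⟨n, hn⟩,
    LinearMap.id, injective_id⟩

theorem addClosed_cogen (X : Mdl Λ) : AddClosed (Cogen Λ X) where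
  zero M hM := by
    have : Subsingleton M := hM
    exact ⟨inferInstance, M, (addClosed_addOf X).zero M hM, LinearMap.id, injective_id⟩
  summand M N h hN := by
    have hM := h.finite hN.1
    obtain ⟨i, p, hp⟩ := h
    exact mem_cogen_of_injective hN hM i
      (LeftInverse.injective (g := p) fun x => LinearMap.congr_fun hp x)
  dsum M N := by
    rintro ⟨hM, Y, hY, f, hf⟩ ⟨hN, Z, hZ, g, hg⟩
    exact ⟨finite_dsum hM hN, Paper.dsum Λ Y Z, (addClosed_addOf X).dsum _ _ hY hZ,
      LinearMap.prodMap f g, Prod.map_injective.2 ⟨hf, hg⟩⟩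

/-- The split injective objects of `Cogen X` are closed under summands and direct sums. -/
theorem addClosed_splitInj [IsNoetherianRing Λ] (X : Mdl Λ) :
    AddClosed {M | SplitInjIn Λ (Cogen Λ X) M} where
  zero M hM := by
    have : Subsingleton M := hM
    exact ⟨(addClosed_cogen X).zero M hM, fun Y _ f _ =>
      ⟨0, LinearMap.ext fun x => Subsingleton.elim _ _⟩⟩
  summand M N h := by
    rintro ⟨hN, hN'⟩
    refine ⟨(addClosed_cogen X).summand _ _ h hN, fun Z hZ f hf => ?_⟩
    obtain ⟨i, p, hp⟩ := h
    have hp' : ∀ x, p (i x) = x := fun x => LinearMap.congr_fun hp x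
    -- A retraction of `N ↪ Z ⊕ N`, `y ↦ (f (p y), y - i (p y))`, restricts to one of `f`.
    obtain ⟨r, hr⟩ := hN' (Paper.dsum Λ Z N) ((addClosed_cogen X).dsum _ _ hZ hN)
      ((f.comp p).prod (LinearMap.id - i.comp p)) (by
        refine (injective_iff_map_eq_zero _).2 fun x hx => ?_
        have h1 : f (p x) = 0 := congrArg Prod.fst hx
        have h2 : x - i (p x) = 0 := congrArg Prod.snd hx
        have h3 : p x = 0 := hf (by rw [h1, map_zero])
        simpa [h3] using h2)
    refine ⟨p.comp (r.comp (LinearMap.inl Λ Z N)), LinearMap.ext fun x => ?_⟩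
    have h1 : r (f (p (i x)), i x - i (p (i x))) = i x := LinearMap.congr_fun hr (i x)
    rw [hp', sub_self] at h1
    change p (r (f x, 0)) = x
    rw [h1, hp']
  dsum M N := by
    rintro ⟨hM, hM'⟩ ⟨hN, hN'⟩
    refine ⟨(addClosed_cogen X).dsum _ _ hM hN, fun Z hZ => ?_⟩
    change ∀ f : (↥M × ↥N) →ₗ[Λ] ↥Z, Injective f →
      ∃ r : ↥Z →ₗ[Λ] (↥M × ↥N), r.comp f = LinearMap.id
    intro f hf
    have hZf : Module.Finite Λ Z := hZ.1
    -- Split off `M`; then `N` embeds into the kernel of the retraction `r` onto `M`.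
    obtain ⟨r, hr⟩ := hM' Z hZ (f.comp (LinearMap.inl Λ M N)) (hf.comp LinearMap.inl_injective)
    have hr' : ∀ a, r (f (a, 0)) = a := fun a => LinearMap.congr_fun hr a
    let f₁ : ↥M →ₗ[Λ] ↥Z := f.comp (LinearMap.inl Λ M N)
    let f₂ : ↥N →ₗ[Λ] ↥Z := f.comp (LinearMap.inr Λ M N)
    have hk : ∀ z, (LinearMap.id - f₁.comp r : ↥Z →ₗ[Λ] ↥Z) z ∈ LinearMap.ker r := fun z => by
      change r (z - f (r z, 0)) = 0
      rw [map_sub, hr', sub_self]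
    let k : ↥Z →ₗ[Λ] LinearMap.ker r := (LinearMap.id - f₁.comp r).codRestrict _ hk
    have hkz : ∀ z, (k z : ↥Z) = z - f (r z, 0) := fun z => rfl
    obtain ⟨s, hs⟩ := hN' (ModuleCat.of Λ (LinearMap.ker r))
      (mem_cogen_of_injective hZ (inferInstanceAs (Module.Finite Λ (LinearMap.ker r)))
        (LinearMap.ker r).subtype Subtype.val_injective) (k.comp f₂) (by
        refine (injective_iff_map_eq_zero _).2 fun b hb => ?_
        have h1 : f (0, b) - f (r (f (0, b)), 0) = 0 := congrArg Subtype.val hb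
        rw [← map_sub] at h1
        have h2 := hf (h1.trans (map_zero f).symm)
        have h3 := congrArg Prod.snd h2
        simpa using h3)
    have hs' : ∀ b, s (k (f (0, b))) = b := fun b => LinearMap.congr_fun hs b
    have hk1 : ∀ a, k (f (a, 0)) = 0 := fun a => Subtype.ext (by
      rw [hkz, hr', sub_self]; rfl)
    let t : ↥Z →ₗ[Λ] ↥N := s.comp k
    refine ⟨(r - (r.comp f₂).comp t).prod t, LinearMap.ext fun x => ?_⟩
    obtain ⟨a, b⟩ := x
    have hab : f (a, b) = f (a, 0) + f (0, b) := by
      rw [← map_add]; congr 1; exact Prod.ext (by simp) (by simp)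
    have ht : t (f (a, b)) = b := by
      change s (k (f (a, b))) = b
      rw [hab, map_add, map_add, hk1, map_zero, zero_add, hs']
    refine Prod.ext ?_ ht
    change r (f (a, b)) - r (f (0, t (f (a, b)))) = a
    rw [ht, hab, map_add, hr', add_sub_cancel_right]

/-! ### Decomposition into indecomposables -/

section Artinian

variable [IsArtinianRing Λ] [IsNoetherianRing Λ]

/-- The length of a module, as a natural number (used for finitely generated modules only). -/
def len (M : Mdl Λ) : ℕ := (Module.length Λ M).toNat

theorem len_eq_of_iso {M A B : Mdl Λ} (hM : Module.Finite Λ M) (h : IsoM Λ M (dsum Λ A B)) :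
    len M = len A + len B := by
  have hA := ((isSummand_left A B).trans h.symm.isSummand).finite hM
  have hB := ((isSummand_right A B).trans h.symm.isSummand).finite hM
  unfold len
  rw [h.some.length_eq, ← ENat.toNat_add Module.length_ne_top Module.length_ne_top]
  exact congrArg ENat.toNat (Module.length_prod Λ ↥A ↥B)

theorem len_pos {M : Mdl Λ} (hM : Module.Finite Λ M) (h : ¬ IsZeroM Λ M) : 0 < len M := by
  refine Nat.pos_of_ne_zero fun h0 => h ?_
  rcases ENat.toNat_eq_zero.1 h0 with h1 | h1
  · exact Module.length_eq_zero_iff.1 h1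
  · exact absurd h1 Module.length_ne_top

/-- A finitely generated module belongs to an additively closed class as soon as all its
indecomposable summands do. -/
theorem AddClosed.mem_of_indec {P : Set (Mdl Λ)} (hP : AddClosed P) {M : Mdl Λ}
    (hM : Module.Finite Λ M) (h : ∀ V, Indec Λ V → IsSummand Λ V M → V ∈ P) : M ∈ P := by
  induction hn : len M using Nat.strong_induction_on generalizing M with
  | _ n ih =>
    by_cases h0 : IsZeroM Λ M
    · exact hP.zero M h0
    by_cases hi : Indec Λ M
    · exact h M hi (IsSummand.refl M)
    simp only [Indec, h0, not_false_eq_true, true_and, not_forall, not_or] at hi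
    obtain ⟨A, B, e, hA, hB⟩ := hi
    have sA := (isSummand_left A B).trans e.symm.isSummand
    have sB := (isSummand_right A B).trans e.symm.isSummand
    have hl := len_eq_of_iso hM e
    have lA := len_pos (sA.finite hM) hA
    have lB := len_pos (sB.finite hM) hB
    exact hP.summand _ _ e.isSummand (hP.dsum _ _
      (ih _ (by omega) (sA.finite hM) (fun V hV hs => h V hV (hs.trans sA)) rfl)
      (ih _ (by omega) (sB.finite hM) (fun V hV hs => h V hV (hs.trans sB)) rfl))

/-- Splitting off a maximal direct summand belonging to a given class. -/
theorem AddClosed.exists_decomp {P : Set (Mdl Λ)} (hP : AddClosed P) {M : Mdl Λ}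
    (hM : Module.Finite Λ M) : ∃ A B, IsoM Λ M (Paper.dsum Λ A B) ∧ A ∈ P ∧
      ∀ V ∈ P, IsSummand Λ V B → IsZeroM Λ V := by
  induction hn : len M using Nat.strong_induction_on generalizing M with
  | _ n ih =>
    by_cases h : ∀ V ∈ P, IsSummand Λ V M → IsZeroM Λ V
    · exact ⟨ModuleCat.of Λ PUnit, M, ⟨LinearEquiv.uniqueProd.symm⟩,
        hP.zero _ (inferInstanceAs (Subsingleton PUnit)), h⟩
    push Not at h
    obtain ⟨V, hV, hs, h0⟩ := h
    obtain ⟨N, e⟩ := hs.exists_compl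
    have sN := (isSummand_right V N).trans e.symm.isSummand
    have hl := len_eq_of_iso hM e
    have lV := len_pos (hs.finite hM) h0
    obtain ⟨A, B, e', hA, hB⟩ := ih _ (by omega) (sN.finite hM) rfl
    exact ⟨Paper.dsum Λ V A, B, e.trans (((IsoM.refl V).dsum e').trans (dsum_assoc V A B).symm),
      hP.dsum _ _ hV hA, hB⟩

/-! ### Endomorphisms of indecomposables -/

/-- Fitting's lemma. -/
theorem Indec.bijective_or_nilpotent {V : Mdl Λ} (hV : Indec Λ V) (hf : Module.Finite Λ V)
    (f : Module.End Λ V) : Bijective f ∨ IsNilpotent f := by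
  obtain ⟨n, hn, hn1⟩ := (f.eventually_isCompl_ker_pow_range_pow.and
    (Filter.eventually_ge_atTop 1)).exists
  have e : IsoM Λ V (dsum Λ (ModuleCat.of Λ (LinearMap.ker (f ^ n)))
      (ModuleCat.of Λ (LinearMap.range (f ^ n)))) :=
    ⟨(Submodule.prodEquivOfIsCompl _ _ hn).symm⟩
  rcases hV.2 _ _ e with h | h
  · left
    have h' : LinearMap.ker (f ^ n) = ⊥ := (Submodule.subsingleton_iff_eq_bot).1 h
    have hi : Injective (f ^ n) := LinearMap.ker_eq_bot.1 h'
    obtain ⟨k, rfl⟩ : ∃ k, n = k + 1 := ⟨n - 1, by omega⟩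
    rw [pow_succ] at hi
    exact IsArtinian.bijective_of_injective_endomorphism f
      (Injective.of_comp (f := ⇑(f ^ k)) hi)
  · right
    exact ⟨n, LinearMap.range_eq_bot.1 ((Submodule.subsingleton_iff_eq_bot).1 h)⟩

/-- The endomorphism ring of an indecomposable is local. -/
theorem Indec.end_local {V : Mdl Λ} (hV : Indec Λ V) (hf : Module.Finite Λ V)
    (f g : Module.End Λ V) (h : f + g = 1) : Bijective f ∨ Bijective g := by
  refine (hV.bijective_or_nilpotent hf f).imp_right fun hn => ?_
  have : g = 1 - f := by rw [← h]; abel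
  rw [this]
  exact (Module.End.isUnit_iff _).1 hn.isUnit_one_sub

theorem isSummand_of_bijective {V A : Mdl Λ} (i : ↥V →ₗ[Λ] ↥A) (p : ↥A →ₗ[Λ] ↥V)
    (h : Bijective (p.comp i)) : IsSummand Λ V A := by
  refine ⟨i, (LinearEquiv.ofBijective _ h).symm.toLinearMap.comp p, LinearMap.ext fun x => ?_⟩
  exact (LinearEquiv.ofBijective _ h).symm_apply_apply x

theorem Indec.summand_dsum {V A B : Mdl Λ} (hV : Indec Λ V) (hf : Module.Finite Λ V)
    (h : IsSummand Λ V (Paper.dsum Λ A B)) : IsSummand Λ V A ∨ IsSummand Λ V B := by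
  obtain ⟨i, p, hp⟩ : ∃ (i : ↥V →ₗ[Λ] (↥A × ↥B)) (p : (↥A × ↥B) →ₗ[Λ] ↥V),
    p.comp i = LinearMap.id := h
  let i₁ : ↥V →ₗ[Λ] ↥A := (LinearMap.fst Λ A B).comp i
  let i₂ : ↥V →ₗ[Λ] ↥B := (LinearMap.snd Λ A B).comp i
  let p₁ : ↥A →ₗ[Λ] ↥V := p.comp (LinearMap.inl Λ A B)
  let p₂ : ↥B →ₗ[Λ] ↥V := p.comp (LinearMap.inr Λ A B)
  have : p₁.comp i₁ + p₂.comp i₂ = (1 : Module.End Λ V) := by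
    refine LinearMap.ext fun x => ?_
    change p ((i x).1, 0) + p (0, (i x).2) = x
    rw [← map_add]
    refine Eq.trans (congrArg p ?_) (LinearMap.congr_fun hp x)
    exact Prod.ext (add_zero (i x).1) (zero_add (i x).2)
  exact (hV.end_local hf _ _ this).imp (isSummand_of_bijective i₁ p₁) (isSummand_of_bijective i₂ p₂)

theorem Indec.summand_of_addOf {V A : Mdl Λ} (hV : Indec Λ V) (hf : Module.Finite Λ V)
    (h : V ∈ addOf Λ A) : IsSummand Λ V A := by
  obtain ⟨n, hn⟩ := h
  induction n with
  | zero =>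
    refine absurd ?_ hV.1
    obtain ⟨i, p, hp⟩ := hn
    refine ⟨fun a b => ?_⟩
    rw [← show p (i a) = a from LinearMap.congr_fun hp a,
      ← show p (i b) = b from LinearMap.congr_fun hp b]
    exact congrArg p (Subsingleton.elim (α := Fin 0 → ↥A) _ _)
  | succ n ih =>
    exact (hV.summand_dsum hf (hn.trans (pw_succ n A).isSummand)).elim id ih

/-- An indecomposable summand of an indecomposable is all of it. -/
theorem Indec.summand_symm {U V : Mdl Λ} (hU : Indec Λ U) (hV : Indec Λ V)
    (h : IsSummand Λ U V) : IsSummand Λ V U := by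
  obtain ⟨U', e⟩ := h.exists_compl
  have h0 : Subsingleton U' := (hV.2 _ _ e).resolve_left hU.1
  refine e.isSummand.trans ⟨LinearMap.fst Λ U U', LinearMap.inl Λ U U', LinearMap.ext fun x => ?_⟩
  exact Prod.ext rfl (Subsingleton.elim _ _)

/-! ### Split injectives of `Cogen T` -/

/-- If `Y ∉ Cogen W`, some nonzero element of `Y` is killed by all maps `Y → W`. -/
theorem exists_ne_zero_of_not_cogen {Y W : Mdl Λ} (hY : Module.Finite Λ Y)
    (h : Y ∉ Cogen Λ W) : ∃ x : ↥Y, x ≠ 0 ∧ ∀ f : ↥Y →ₗ[Λ] ↥W, f x = 0 := by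
  let S : Set (Submodule Λ Y) := {N | ∃ (n : ℕ) (f : ↥Y →ₗ[Λ] (Fin n → ↥W)), LinearMap.ker f = N}
  obtain ⟨N, ⟨n, f, rfl⟩, hmin⟩ := IsArtinian.set_has_minimal S ⟨_, 0, 0, rfl⟩
  have hne : LinearMap.ker f ≠ ⊥ := fun h0 =>
    h (mem_cogen_iff_s6.2 ⟨hY, n, f, LinearMap.ker_eq_bot.1 h0⟩)
  obtain ⟨x, hx, hx0⟩ := Submodule.exists_mem_ne_zero_of_ne_bot hne
  refine ⟨x, hx0, fun g => ?_⟩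
  by_contra hg
  let F : ↥Y →ₗ[Λ] (Fin (n + 1) → ↥W) :=
    (Fin.consLinearEquiv Λ (fun _ : Fin (n + 1) => ↥W)).toLinearMap.comp (g.prod f)
  have hF : ∀ y, F y = 0 ↔ g y = 0 ∧ f y = 0 := fun y => by
    change (Fin.consLinearEquiv Λ (fun _ : Fin (n + 1) => ↥W)) (g y, f y) = 0 ↔ _
    rw [LinearEquiv.map_eq_zero_iff, Prod.mk_eq_zero]
  refine hmin (LinearMap.ker F) ⟨n + 1, F, rfl⟩ (lt_of_le_of_ne ?_ ?_)
  · exact fun y hy => ((hF y).1 hy).2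
  · intro he
    exact hg ((hF x).1 (he ▸ hx : x ∈ LinearMap.ker F)).1

/-- An indecomposable `Y` with `T ≅ Y ⊕ W` and `Y ∉ Cogen W` is split injective in `Cogen T`.
Among the nonzero elements killed by all maps `Y → W` one chooses `x` generating a minimal
`End Y`-submodule; `x` is then killed by all non-invertible endomorphisms of `Y`, so that any
embedding of `Y` into a power of `T` has an invertible component at some summand `Y`. -/
theorem Indec.splitInj {T Y W : Mdl Λ} (hY : Indec Λ Y) (hT : Module.Finite Λ T)
    (hArt : IsArtinian (Module.End Λ Y) Y)
    (e : IsoM Λ T (Paper.dsum Λ Y W)) (h : Y ∉ Cogen Λ W) : SplitInjIn Λ (Cogen Λ T) Y := by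
  have hs := (isSummand_left Y W).trans e.symm.isSummand
  have hYf := hs.finite hT
  refine ⟨mem_cogen_of_addOf hT (mem_addOf_of_summand hs), fun Z hZ g hg => ?_⟩
  obtain ⟨x₀, hx₀, hx₀W⟩ := exists_ne_zero_of_not_cogen hYf h
  let R := Module.End Λ Y
  let S : Set (Submodule R Y) :=
    {N | ∃ x : ↥Y, x ≠ 0 ∧ (∀ f : ↥Y →ₗ[Λ] ↥W, f x = 0) ∧ Submodule.span R {x} = N}
  obtain ⟨N, ⟨x, hx, hxW, rfl⟩, hmin⟩ := IsArtinian.set_has_minimal S ⟨_, x₀, hx₀, hx₀W, rfl⟩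
  have key : ∀ φ : R, φ x ≠ 0 → Bijective φ := by
    intro φ hφ
    by_contra hb
    have hle : Submodule.span R {φ x} ≤ Submodule.span R {x} := by
      rw [Submodule.span_singleton_le_iff_mem]
      exact Submodule.mem_span_singleton.2 ⟨φ, rfl⟩
    have heq : Submodule.span R {φ x} = Submodule.span R {x} := by
      by_contra hne
      exact hmin _ ⟨φ x, hφ, fun f => hxW (f.comp φ), rfl⟩ (lt_of_le_of_ne hle hne)
    have hxm : x ∈ Submodule.span R {φ x} := heq ▸ Submodule.mem_span_singleton_self x
    obtain ⟨ψ, hψ⟩ := Submodule.mem_span_singleton.1 hxm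
    have hψ' : ψ (φ x) = x := hψ
    rcases hY.end_local hYf (ψ * φ) (1 - ψ * φ) (by abel) with hu | hu
    · exact hb (IsArtinian.bijective_of_injective_endomorphism φ
        (Injective.of_comp (f := ⇑ψ) hu.1))
    · refine hx (hu.1 ?_)
      rw [map_zero]
      change x - ψ (φ x) = 0
      rw [hψ', sub_self]
  obtain ⟨_, n, c, hc⟩ := mem_cogen_iff_s6.1 hZ
  have hcx : c (g x) ≠ 0 := fun h0 => hx (hg (hc (by rw [h0, map_zero, map_zero])))
  obtain ⟨j, hj⟩ := Function.ne_iff.1 hcx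
  let E : ↥T ≃ₗ[Λ] (↥Y × ↥W) := e.some
  let d : ↥Z →ₗ[Λ] (↥Y × ↥W) := E.toLinearMap.comp ((LinearMap.proj j).comp c)
  have hd : d (g x) ≠ 0 := fun h0 => hj ((E.map_eq_zero_iff).1 h0)
  have hd2 : (d (g x)).2 = 0 := hxW ((LinearMap.snd Λ Y W).comp (d.comp g))
  have hd1 : (d (g x)).1 ≠ 0 := fun h0 => hd (Prod.ext h0 hd2)
  have hbij := key ((LinearMap.fst Λ Y W).comp (d.comp g)) hd1
  exact ⟨(LinearEquiv.ofBijective _ hbij).symm.toLinearMap.comp ((LinearMap.fst Λ Y W).comp d),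
    LinearMap.ext fun y => (LinearEquiv.ofBijective _ hbij).symm_apply_apply y⟩

end Artinian

/-- Finitely generated modules over a finite-dimensional algebra are Artinian over their
endomorphism rings, being finite-dimensional. -/
theorem isArtinian_end (K : Type) [Field K] [Algebra K Λ] [FiniteDimensional K Λ]
    (Y : Type) [AddCommGroup Y] [Module Λ Y] [Module.Finite Λ Y] :
    IsArtinian (Module.End Λ Y) Y := by
  let _ : Module K Y := Module.compHom Y (algebraMap K Λ)
  have : IsScalarTower K Λ Y := ⟨fun a b y => by
    rw [Algebra.smul_def, mul_smul]; rfl⟩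
  have : SMulCommClass Λ K Y := ⟨fun a b y => by
    change a • (algebraMap K Λ b • y) = algebraMap K Λ b • (a • y)
    rw [← mul_smul, ← mul_smul, Algebra.commutes]⟩
  have : SMulCommClass K Λ Y := SMulCommClass.symm _ _ _
  have : Module.Finite K Y := Module.Finite.trans Λ Y
  have : IsArtinian K Y := inferInstance
  exact isArtinian_of_tower K inferInstance

/-! ### Partial sums of the sequence -/

theorem seqSum_succ (X : ℕ → Mdl Λ) {k m : ℕ} (hk : k ≤ m) :
    IsoM Λ (seqSum Λ X k m) (dsum Λ (X k) (seqSum Λ X (k + 1) m)) := by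
  let F : ((j : Finset.Icc k m) → ↥(X j.1)) →ₗ[Λ]
      (↥(X k) × ((j : Finset.Icc (k + 1) m) → ↥(X j.1))) :=
    (LinearMap.proj (R := Λ) (φ := fun j : Finset.Icc k m => ↥(X j.1))
      ⟨k, Finset.mem_Icc.2 ⟨le_rfl, hk⟩⟩).prod
    (LinearMap.pi fun j => LinearMap.proj (R := Λ) (φ := fun j : Finset.Icc k m => ↥(X j.1))
      ⟨j.1, Finset.mem_Icc.2 ⟨by have := Finset.mem_Icc.1 j.2; omega, (Finset.mem_Icc.1 j.2).2⟩⟩)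
  refine ⟨LinearEquiv.ofBijective F ⟨?_, ?_⟩⟩
  · refine (injective_iff_map_eq_zero _).2 fun f hf => funext fun ⟨j, hj⟩ => ?_
    have hj' := Finset.mem_Icc.1 hj
    rcases eq_or_lt_of_le hj'.1 with h | h
    · subst h
      exact congrArg Prod.fst hf
    · exact congrFun (congrArg Prod.snd hf) ⟨j, Finset.mem_Icc.2 ⟨h, hj'.2⟩⟩
  · rintro ⟨x, g⟩
    refine ⟨fun j => if h : k = j.1 then h ▸ x else g ⟨j.1, Finset.mem_Icc.2
      ⟨lt_of_le_of_ne (Finset.mem_Icc.1 j.2).1 h, (Finset.mem_Icc.1 j.2).2⟩⟩, Prod.ext ?_ ?_⟩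
    · change (if h : k = k then _ else _) = x
      simp
    · refine funext fun ⟨j, hj⟩ => ?_
      have hj' := Finset.mem_Icc.1 hj
      change (if h : k = j then _ else _) = g ⟨j, hj⟩
      rw [dif_neg (by omega)]

theorem seqSum_summand (X : ℕ → Mdl Λ) {k m : ℕ} (h1 : 1 ≤ k) (hk : k ≤ m) :
    IsSummand Λ (seqSum Λ X k m) (seqSum Λ X 1 m) := by
  induction k, h1 using Nat.le_induction with
  | base => exact IsSummand.refl _
  | succ k _ ih =>
    exact ((isSummand_right _ _).trans (seqSum_succ X (by omega)).symm.isSummand).trans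
      (ih (by omega))

section Main

variable [IsArtinianRing Λ] [IsNoetherianRing Λ]

/-- For `T ≅ X ⊕ D` basic and `V` an indecomposable summand of `X`, the module `T/add V`
exists and has `D` as a summand. -/
theorem exists_deleted {T X D V : Mdl Λ} (hT : Module.Finite Λ T) (hTb : IsBasic Λ T)
    (e : IsoM Λ T (dsum Λ X D)) (hV : Indec Λ V) (hVX : IsSummand Λ V X) :
    ∃ W, IsoM Λ T (dsum Λ V W) ∧ IsSummand Λ D W ∧ IsDeleted Λ T (addOf Λ V) W := by
  obtain ⟨X', e'⟩ := hVX.exists_compl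
  have eT : IsoM Λ T (dsum Λ V (dsum Λ X' D)) :=
    e.trans ((e'.dsum (IsoM.refl D)).trans (dsum_assoc _ _ _))
  refine ⟨dsum Λ X' D, eT, isSummand_right _ _, V,
    eT.trans ⟨LinearEquiv.prodComm Λ _ _⟩, fun U _ hU => mem_addOf_of_summand hU, ?_⟩
  intro U hU hUW hUV
  have sW := (isSummand_right V (dsum Λ X' D)).trans eT.symm.isSummand
  have hVU := hU.summand_symm hV (hU.summand_of_addOf ((hUW.trans sW).finite hT) hUV)
  exact hTb V hV.1 (((IsSummand.refl V).dsum (hVU.trans hUW)).trans eT.symm.isSummand)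

/-- An indecomposable split injective object of `Cogen T` is a summand of every summand `W` of
`T` that cogenerates it. -/
theorem summand_of_splitInj {T W V : Mdl Λ} (hT : Module.Finite Λ T) (hWT : IsSummand Λ W T)
    (hV : Indec Λ V) (hs : SplitInjIn Λ (Cogen Λ T) V) (hVW : V ∈ Cogen Λ W) :
    IsSummand Λ V W := by
  obtain ⟨hVf, n, f, hf⟩ := mem_cogen_iff_s6.1 hVW
  have hW := mem_cogen_of_addOf hT (mem_addOf_of_summand hWT)
  obtain ⟨r, hr⟩ := hs.2 (pw n W) ((addClosed_cogen T).pw hW n) f hf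
  exact hV.summand_of_addOf hVf ⟨n, f, r, hr⟩

/-- The forward direction for a single index `k`, with `X = X_k`: `X` is obtained from
`I_s(Cogen T)` by deleting the summands in `Cogen D`. -/
theorem exists_minSplitInj {T X D : Mdl Λ} (hT : Module.Finite Λ T) (hTb : IsBasic Λ T)
    (hArt : ∀ Y : Mdl Λ, Module.Finite Λ Y → IsArtinian (Module.End Λ Y) Y)
    (e : IsoM Λ T (dsum Λ X D))
    (h : ∀ Y, Indec Λ Y → IsSummand Λ Y X →
      ∀ W, IsDeleted Λ T (addOf Λ Y) W → Y ∉ Cogen Λ W) :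
    ∃ I, IsMinSplitInj Λ (Cogen Λ T) I ∧ IsDeleted Λ I (Cogen Λ D) X := by
  have sX := (isSummand_left X D).trans e.symm.isSummand
  have sD := (isSummand_right X D).trans e.symm.isSummand
  have hP := addClosed_splitInj T
  have hXs : SplitInjIn Λ (Cogen Λ T) X := by
    refine hP.mem_of_indec (sX.finite hT) fun V hV hVX => ?_
    obtain ⟨W, eW, _, hW⟩ := exists_deleted hT hTb e hV hVX
    exact hV.splitInj hT (hArt V ((hVX.trans sX).finite hT)) eW (h V hV hVX W hW)
  obtain ⟨A, B, eD, hA, hB⟩ := hP.exists_decomp (sD.finite hT)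
  have sA := (isSummand_left A B).trans eD.symm.isSummand
  have eT : IsoM Λ T (dsum Λ (dsum Λ X A) B) :=
    e.trans (((IsoM.refl X).dsum eD).trans (dsum_assoc X A B).symm)
  refine ⟨dsum Λ X A, ⟨hTb.summand ((isSummand_left _ B).trans eT.symm.isSummand), ?_⟩,
    A, IsoM.refl _, ?_, ?_⟩
  · refine Set.Subset.antisymm (hP.addOf_subset (hP.dsum _ _ hXs hA)) fun Y hY => ?_
    refine (addClosed_addOf _).mem_of_indec hY.1.1 fun V hV hVY => ?_
    have hVs := hP.summand _ _ hVY hY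
    have hVT := summand_of_splitInj hT (IsSummand.refl T) hV hVs hVs.1
    rcases hV.summand_dsum hVs.1.1 (hVT.trans eT.isSummand) with h1 | h1
    · exact mem_addOf_of_summand h1
    · exact absurd (hB V hVs h1) hV.1
  · intro V _ hVA
    exact mem_cogen_of_addOf (sD.finite hT) (mem_addOf_of_summand (hVA.trans sA))
  · intro V hV hVX hVD
    obtain ⟨W, _, hDW, hW⟩ := exists_deleted hT hTb e hV hVX
    exact h V hV hVX W hW (cogen_mono_s6 hDW hVD)

end Main

end Paper

open Paper in
/-- Lemma: a preordered basic `τ⁻¹`-rigid module `Δ = (X 1, …, X m)`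
is cogen-preordered if and only if `X k = I_s(Cogen Δ_{≥k}) / Cogen Δ_{>k}`
for all `1 ≤ k ≤ m`. -/
theorem stmt_6 (K Λ : Type) [Field K] [Ring Λ] [Algebra K Λ] [FiniteDimensional K Λ]
    (hΛbasic : IsBasic Λ (ModuleCat.of Λ Λ))
    (m : ℕ) (X : ℕ → Mdl Λ)
    (hb : IsBasic Λ (seqSum Λ X 1 m)) (hr : TauInvRigid Λ (seqSum Λ X 1 m)) :
    CogenPreordered Λ m X ↔
    ∀ k, 1 ≤ k → k ≤ m →
      ∃ I : Mdl Λ, IsMinSplitInj Λ (Cogen Λ (seqSum Λ X k m)) I ∧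
        IsDeleted Λ I (Cogen Λ (seqSum Λ X (k + 1) m)) (X k) := by
  have : IsArtinianRing Λ := isArtinian_of_tower K inferInstance
  have : IsNoetherianRing Λ := isNoetherian_of_tower K inferInstance
  constructor
  · rintro ⟨-, -, h⟩ k h1 hk
    have hs := seqSum_summand X h1 hk
    exact exists_minSplitInj (hs.finite hr.1) (hb.summand hs)
      (fun Y hY => isArtinian_end K Y) (seqSum_succ X hk) (h k h1 hk)
  · refine fun h => ⟨hb, hr, fun k h1 hk Y hY hYX W hW hYW => ?_⟩
    have hT := (seqSum_summand X h1 hk).finite hr.1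
    obtain ⟨I, ⟨-, hI⟩, Z, eI, -, -⟩ := h k h1 hk
    have hYs : Y ∈ addOf Λ I :=
      mem_addOf_of_summand (hYX.trans ((isSummand_left _ Z).trans eI.symm.isSummand))
    rw [hI] at hYs
    obtain ⟨Z', eW, -, hW'⟩ := hW
    have hYW' := summand_of_splitInj hT ((isSummand_left _ Z').trans eW.symm.isSummand) hY hYs hYW
    exact hW' Y hY hYW' (mem_addOf_of_summand (IsSummand.refl Y))
end
end
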